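/- Assume GRH for L(s,χ). There is an absolute constant C such that for every primitive Dirichlet character χ mod M, every real t, and every X with 4 ≤ X ≤ t², setting σ₁ = 1/2 + 4/log X: Σ_{γ_χ} (σ₁ − 1/2)/((σ₁ − 1/2)² + (t − γ_χ)²) ≤ C·E_χ(X,t), where the sum is over the ordinates γ_χ of the nontrivial zeros 1/2 + iγ_χ of L(s,χ) counted with multiplicity, and E_χ(X,t) = |Σ_{n≤X²} Λ_X(n)χ(n)·n^{−σ₁−it}| + log(M(1+|t|)). -/

import Mathlib

open Complex MeasureTheory ProbabilityTheory Filter Finset DirichletCharacter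

noncomputable section

/-- The finset of primes `p ≤ X²`. -/
def primesUptoSq (X : ℝ) : Finset ℕ := (Finset.range (⌊X ^ 2⌋₊ + 1)).filter Nat.Prime

/-- The finset of primes `p ≤ x`. -/
def primesUpto (x : ℝ) : Finset ℕ := (Finset.range (⌊x⌋₊ + 1)).filter Nat.Prime

/-- The Dirichlet polynomial `P_χ(γ) = ∑_{p ≤ X²} χ(p) p^{-1/2 - iγ}`. -/
def Pgamma {N : ℕ} (χ : DirichletCharacter ℂ N) (X γ : ℝ) : ℂ :=
  ∑ p ∈ primesUptoSq X, χ (p : ZMod N) * (p : ℂ) ^ (-(1 / 2 : ℂ) - I * γ)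

/-- `P_ℒ(γ) = a₁ P_{χ₁}(γ) + a₂ P_{χ₂}(γ)`. -/
def PLgamma {N₁ N₂ : ℕ} (a₁ a₂ : ℝ) (χ₁ : DirichletCharacter ℂ N₁)
    (χ₂ : DirichletCharacter ℂ N₂) (X γ : ℝ) : ℂ :=
  (a₁ : ℂ) * Pgamma χ₁ X γ + (a₂ : ℂ) * Pgamma χ₂ X γ

/-- The value of the random polynomial `P_χ(θ) = ∑_{p ≤ X²} χ(p) e^{2πiθ_p}/√p` at a
point `v = (θ_p)_p`. -/
def Ptheta {N : ℕ} (χ : DirichletCharacter ℂ N) (X : ℝ) (v : ℕ → ℝ) : ℂ :=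
  ∑ p ∈ primesUptoSq X, χ (p : ZMod N) * Complex.exp (2 * Real.pi * I * (v p)) / Real.sqrt p

/-- `P_ℒ(θ) = a₁ P_{χ₁}(θ) + a₂ P_{χ₂}(θ)`. -/
def PLtheta {N₁ N₂ : ℕ} (a₁ a₂ : ℝ) (χ₁ : DirichletCharacter ℂ N₁)
    (χ₂ : DirichletCharacter ℂ N₂) (X : ℝ) (v : ℕ → ℝ) : ℂ :=
  (a₁ : ℂ) * Ptheta χ₁ X v + (a₂ : ℂ) * Ptheta χ₂ X v

/-- The ordinates `γ ∈ (0, T]` of the zeros of `ζ` on the critical line (under RH, these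
are exactly the ordinates of the nontrivial zeros of `ζ` in the upper half plane up to `T`). -/
def zetaZerosIn (T : ℝ) : Set ℝ :=
  {γ : ℝ | 0 < γ ∧ γ ≤ T ∧ riemannZeta (1 / 2 + I * γ) = 0}

/-- `N(T)`, the number of nontrivial zeros of `ζ` with ordinate in `(0, T]`. -/
def NT (T : ℝ) : ℝ := ((zetaZerosIn T).ncard : ℝ)

/-- The Riemann Hypothesis: all nontrivial zeros of `ζ` lie on the critical line. -/
def RHzeta : Prop := ∀ s : ℂ, 0 < s.re → s.re < 1 → riemannZeta s = 0 → s.re = 1 / 2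

/-- GRH for `L(s, χ)`: all nontrivial zeros of `L(s,χ)` lie on the critical line. -/
def GRHchar {N : ℕ} [NeZero N] (χ : DirichletCharacter ℂ N) : Prop :=
  ∀ s : ℂ, 0 < s.re → s.re < 1 → LFunction χ s = 0 → s.re = 1 / 2

/-- Hypothesis 𝒟: no nontrivial zero of `L(s,χ)` coincides with a nontrivial zero of `ζ`. -/
def HypD {N : ℕ} [NeZero N] (χ : DirichletCharacter ℂ N) : Prop :=
  ∀ s : ℂ, 0 < s.re → s.re < 1 → riemannZeta s = 0 → LFunction χ s ≠ 0

/-- Hypothesis `H_{α,χ}`: there is `c > 0` such that for every `C ∈ (0,1)`, the limsup as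
`T → ∞` of the proportion of ordinates `γ ∈ (0,T]` of zeros of `ζ` lying within `C/log T`
of an ordinate of a (critical-line) zero of `L(s,χ)` is at most `c C^α`. -/
def HypH {N : ℕ} [NeZero N] (χ : DirichletCharacter ℂ N) (α : ℝ) : Prop :=
  ∃ c > (0 : ℝ), ∀ C : ℝ, 0 < C → C < 1 →
    Filter.limsup (fun T : ℝ =>
      (((zetaZerosIn T ∩ {γ : ℝ | ∃ x : ℝ,
          LFunction χ (1 / 2 + I * x) = 0 ∧ |x - γ| ≤ C / Real.log T}).ncard : ℝ) / NT T))
      Filter.atTop ≤ c * C ^ α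

/-- `Ψ = ∑_{p ≤ X²} 1/p`. -/
def Psi (X : ℝ) : ℝ := ∑ p ∈ primesUptoSq X, (1 : ℝ) / p

/-- `Ψ(T) = ∑_{p ≤ T} 1/p`. -/
def PsiT (T : ℝ) : ℝ := ∑ p ∈ primesUpto T, (1 : ℝ) / p

/-- The weight `w_X(n)`. -/
def wX (X : ℝ) (n : ℕ) : ℝ :=
  if (n : ℝ) ≤ X then 1 else Real.log (X ^ 2 / n) / Real.log X

/-- `Λ_X(n) = Λ(n) w_X(n)`. -/
def LambdaX (X : ℝ) (n : ℕ) : ℝ := ArithmeticFunction.vonMangoldt n * wX X n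

/-- `σ₁ = 1/2 + 4/log X`. -/
def sigma1 (X : ℝ) : ℝ := 1 / 2 + 4 / Real.log X

/-- `E_χ(X,t) = |∑_{n ≤ X²} Λ_X(n) χ(n) n^{-σ₁-it}| + log(M(1+|t|))`. -/
def EchiT {N : ℕ} (χ : DirichletCharacter ℂ N) (X t : ℝ) : ℝ :=
  ‖∑ m ∈ Finset.Icc 1 ⌊X ^ 2⌋₊,
      (LambdaX X m : ℂ) * χ (m : ZMod N) * (m : ℂ) ^ (-(sigma1 X : ℂ) - I * t)‖
    + Real.log (N * (1 + |t|))

/-!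
Let `Λ` be the completion of `L(·, χ)`. Under GRH, Phragmén–Lindelöf applied to
`Λ(s - h) / Λ(s + h)` to the right of the critical line gives `|Λ(s - h)| ≤ |Λ(s + h)|`, hence
`0 ≤ re Λ'/Λ(s)` there. Dividing out zeros first leaves the argument intact, so `re Λ'/Λ(s)`
dominates every finite partial sum of `re 1 / (s - ρ)`, and no Hadamard product is needed. It
remains to bound `re Λ'/Λ` at `s = σ₁ + it`.

Let `K(w) = (e^{2Lw} - e^{Lw}) / (w² L)` with `L = log X`. The integral of `K(w) L'/L(s + w)` over
`re w = 1` is `-2π` times the weighted Dirichlet polynomial. Moving the line to `re w = -b`,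
`b = 2 / log X`, crosses the pole of `K` at `0` and picks up `2π L'/L(s)`. On the new line `|K|` is
at most half the Poisson kernel of the half-plane `re w > -b` at the point `0`, so by positivity
the integral of `K(w) Λ'/Λ(s + w)` is at most `π re Λ'/Λ(s)`, only half of what the residue
contributes. What is left is the difference of `L'/L` and `Λ'/Λ`, the logarithmic derivative of
the gamma factor, of size `O(log(M(1 + |t|)))`. For the trivial character one works with
`(s - 1) ζ(s)`; the pole contributes `O(1)` because `X ≤ t²`.
-/

open Asymptotics Bornology Set Topology
open scoped ComplexConjugate

/-! ### Polynomial growth and integrals over vertical lines -/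

/-- Polynomial growth of order `r` on `S`: `f z = O(‖z‖ ^ r)` as `z → ∞` within `S`. Nothing is
said about bounded `z`, so that poles of `f` are harmless and `r` may be negative. -/
def GrowthOn (f : ℂ → ℂ) (S : Set ℂ) (r : ℝ) : Prop :=
  f =O[cobounded ℂ ⊓ 𝓟 S] fun z => ‖z‖ ^ r

namespace GrowthOn

variable {f g : ℂ → ℂ} {S T : Set ℂ} {r r' : ℝ}

lemma tendsto_norm_atTop (S : Set ℂ) :
    Tendsto (fun z : ℂ => ‖z‖) (cobounded ℂ ⊓ 𝓟 S) atTop :=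
  tendsto_norm_cobounded_atTop.mono_left inf_le_left

lemma mono_set (hf : GrowthOn f S r) (hTS : T ⊆ S) : GrowthOn f T r :=
  hf.mono <| by gcongr

lemma mono_exponent (hf : GrowthOn f S r) (hr : r ≤ r') : GrowthOn f S r' := by
  refine hf.trans <| .of_bound' ?_
  filter_upwards [(tendsto_norm_atTop S).eventually_ge_atTop 1] with z hz
  simp only [Real.norm_eq_abs]
  gcongr

lemma mul (hf : GrowthOn f S r) (hg : GrowthOn g S r') :
    GrowthOn (fun z => f z * g z) S (r + r') := by
  refine (IsBigO.mul hf hg).congr' .rfl ?_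
  filter_upwards [(tendsto_norm_atTop S).eventually_gt_atTop 0] with z hz
  exact (Real.rpow_add hz r r').symm

lemma of_norm_le {C : ℝ} (h : ∀ z ∈ S, ‖f z‖ ≤ C) : GrowthOn f S 0 := by
  simp only [GrowthOn, Real.rpow_zero]
  exact .of_bound C <| mem_inf_of_right <| mem_principal.mpr fun z hz => by simpa using h z hz

lemma const (c : ℂ) (S : Set ℂ) : GrowthOn (fun _ => c) S 0 :=
  of_norm_le fun _ _ => le_rfl

lemma add (hf : GrowthOn f S r) (hg : GrowthOn g S r) : GrowthOn (fun z => f z + g z) S r :=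
  IsBigO.add hf hg

lemma id (S : Set ℂ) : GrowthOn (fun z => z) S 1 :=
  .of_bound' (.of_forall fun z => by simp)

lemma sub_const (hf : GrowthOn f S r) (hr : 0 ≤ r) (c : ℂ) : GrowthOn (fun z => f z - c) S r :=
  IsBigO.sub hf ((const c S).mono_exponent hr)

lemma isTheta_norm_add_rpow (s : ℂ) (S : Set ℂ) (r : ℝ) :
    (fun z : ℂ => ‖s + z‖ ^ r) =Θ[cobounded ℂ ⊓ 𝓟 S] fun z => ‖z‖ ^ r := by
  have hconst : (fun _ => s) =o[cobounded ℂ ⊓ 𝓟 S] fun z : ℂ => z :=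
    (isLittleO_const_id_cobounded s).mono inf_le_left
  have htheta : (fun z => ‖z‖) =Θ[cobounded ℂ ⊓ 𝓟 S] fun z : ℂ => ‖s + z‖ :=
    hconst.right_isTheta_add.norm_left.norm_right
  exact (htheta.rpow (r := r) (.of_forall fun _ => norm_nonneg _)
    (.of_forall fun _ => norm_nonneg _)).symm

lemma comp_const_add (hf : GrowthOn f S r) (s : ℂ) (hT : MapsTo (s + ·) T S) :
    GrowthOn (fun z => f (s + z)) T r := by
  have hs : Tendsto (s + ·) (cobounded ℂ ⊓ 𝓟 T) (cobounded ℂ ⊓ 𝓟 S) :=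
    (tendsto_const_add_cobounded s).inf (tendsto_principal_principal.mpr hT)
  exact (hf.comp_tendsto hs).trans (isTheta_norm_add_rpow s T r).isBigO

lemma comp_neg (hf : GrowthOn f S r) (hT : MapsTo (-·) T S) : GrowthOn (fun z => f (-z)) T r := by
  have hneg : Tendsto (-· : ℂ → ℂ) (cobounded ℂ ⊓ 𝓟 T) (cobounded ℂ ⊓ 𝓟 S) :=
    tendsto_neg_cobounded.inf (tendsto_principal_principal.mpr hT)
  simpa [GrowthOn, Function.comp_def] using IsBigO.comp_tendsto hf hneg

lemma inv_sub (p : ℂ) (S : Set ℂ) : GrowthOn (fun z => (z - p)⁻¹) S (-1) := by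
  have := (isTheta_norm_add_rpow (-p) S (-1)).isBigO
  refine .trans (.of_bound' <| .of_forall fun z => ?_) this
  simp [Real.rpow_neg_one, neg_add_eq_sub]

lemma tendsto_zero (hf : GrowthOn f S r) (hr : r < 0) :
    Tendsto f (cobounded ℂ ⊓ 𝓟 S) (𝓝 0) := by
  refine IsBigO.trans_tendsto hf ?_
  simpa [Function.comp_def] using
    (tendsto_rpow_neg_atTop (neg_pos.mpr hr)).comp (tendsto_norm_atTop S)

/-- Subtracting the value at `p` does not change the order when `r ≥ 0`; division by `z - p` then
gains one power. -/
lemma dslope (hf : GrowthOn f S r) (hr : 0 ≤ r) (p : ℂ) : GrowthOn (dslope f p) S (r - 1) := by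
  have hmul := (inv_sub p S).mul (hf.sub_const hr (f p))
  rw [neg_add_eq_sub] at hmul
  refine hmul.congr' ?_ .rfl
  filter_upwards [(tendsto_norm_atTop S).eventually_gt_atTop ‖p‖] with z hz
  have hzp : z ≠ p := by rintro rfl; exact hz.false
  rw [dslope_of_ne _ hzp, slope_def_module, smul_eq_mul]

lemma isTheta_one_add_norm_rpow (S : Set ℂ) (r : ℝ) :
    (fun z : ℂ => (1 + ‖z‖) ^ r) =Θ[cobounded ℂ ⊓ 𝓟 S] fun z => ‖z‖ ^ r := by
  have hconst : (fun _ => (1 : ℝ)) =o[cobounded ℂ ⊓ 𝓟 S] fun z : ℂ => ‖z‖ :=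
    (isLittleO_const_id_atTop 1).comp_tendsto (tendsto_norm_atTop S)
  exact (hconst.right_isTheta_add.rpow (r := r) (.of_forall fun _ => norm_nonneg _)
    (.of_forall fun z => show 0 ≤ 1 + ‖z‖ by positivity)).symm

lemma exists_norm_le (hf : GrowthOn f S r) (hS : IsClosed S) (hcont : ContinuousOn f S) :
    ∃ C, 0 ≤ C ∧ ∀ z ∈ S, ‖f z‖ ≤ C * (1 + ‖z‖) ^ r := by
  have hpos (z : ℂ) : 0 < (1 + ‖z‖) ^ r := by positivity
  obtain ⟨c, hc, hbound⟩ := (hf.trans (isTheta_one_add_norm_rpow S r).symm.isBigO).exists_nonneg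
  rw [isBigOWith_iff, eventually_inf_principal] at hbound
  obtain ⟨R, -, hR⟩ := (hasBasis_cobounded_norm (E := ℂ)).eventually_iff.mp hbound
  have hcompact : IsCompact (S ∩ Metric.closedBall 0 R) :=
    (isCompact_closedBall 0 R).inter_left hS
  have hpow : Continuous fun z : ℂ => (1 + ‖z‖) ^ r :=
    .rpow_const (by fun_prop) fun z => .inl (by positivity)
  have hratio : ContinuousOn (fun z => ‖f z‖ / (1 + ‖z‖) ^ r) S :=
    hcont.norm.div hpow.continuousOn fun z _ => (hpos z).ne'
  obtain ⟨C, hC⟩ := hcompact.exists_bound_of_continuousOn (hratio.mono inter_subset_left)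
  refine ⟨max c C, hc.trans (le_max_left ..), fun z hz => ?_⟩
  rcases le_or_gt R ‖z‖ with hzR | hzR
  · have := hR hzR hz
    rw [Real.norm_of_nonneg (hpos z).le] at this
    exact this.trans (by gcongr; exact le_max_left ..)
  · have := hC z ⟨hz, by simpa using hzR.le⟩
    rw [Real.norm_of_nonneg (by positivity), div_le_iff₀ (hpos z)] at this
    exact this.trans (by gcongr; exact le_max_right ..)

end GrowthOn

/-- The integral of `f` over the line `Re z = x`, parametrised by the imaginary part; it is
`1 / i` times the contour integral `∫ f(z) dz`. -/
def verticalIntegral (f : ℂ → ℂ) (x : ℝ) : ℂ := ∫ y : ℝ, f (x + y * I)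

section VerticalIntegral

variable {f g : ℂ → ℂ} {r x x₁ x₂ : ℝ}

lemma verticalIntegral_congr (h : EqOn f g (re ⁻¹' {x})) :
    verticalIntegral f x = verticalIntegral g x :=
  integral_congr_ae <| .of_forall fun y => h (by simp)

lemma verticalIntegral_add (hf : VerticalIntegrable f x) (hg : VerticalIntegrable g x) :
    verticalIntegral (fun z => f z + g z) x = verticalIntegral f x + verticalIntegral g x :=
  integral_add hf hg

lemma verticalIntegral_sub (hf : VerticalIntegrable f x) (hg : VerticalIntegrable g x) :
    verticalIntegral (fun z => f z - g z) x = verticalIntegral f x - verticalIntegral g x :=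
  integral_sub hf hg

lemma verticalIntegral_const_mul (a : ℂ) (f : ℂ → ℂ) (x : ℝ) :
    verticalIntegral (fun z => a * f z) x = a * verticalIntegral f x :=
  integral_const_mul a _

lemma verticalIntegrable_const_mul (a : ℂ) (hf : VerticalIntegrable f x) :
    VerticalIntegrable (fun z => a * f z) x :=
  hf.const_mul a

lemma verticalIntegrable_sub (hf : VerticalIntegrable f x) (hg : VerticalIntegrable g x) :
    VerticalIntegrable (fun z => f z - g z) x :=
  Integrable.sub hf hg

lemma verticalIntegrable_congr (h : EqOn f g (re ⁻¹' {x})) (hf : VerticalIntegrable f x) :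
    VerticalIntegrable g x :=
  hf.congr <| .of_forall fun y => h (by simp)

lemma verticalIntegrable_exp_mul (v : ℝ) (hf : VerticalIntegrable f x) :
    VerticalIntegrable (fun w => cexp (v * w) * f w) x := by
  refine Integrable.bdd_mul (c := Real.exp (v * x)) hf (by fun_prop) (.of_forall fun y => ?_)
  simp [norm_exp]

lemma integrable_one_add_abs_rpow (hr : r < -1) : Integrable fun y : ℝ => (1 + |y|) ^ r := by
  have hdim : (Module.finrank ℝ ℝ : ℝ) < -r := by rw [Module.finrank_self]; norm_num; linarith
  simpa using integrable_one_add_norm (μ := volume) hdim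

lemma one_add_norm_rpow_le_one_add_abs_im_rpow (hr : r ≤ 0) (x y : ℝ) :
    (1 + ‖(x + y * I : ℂ)‖) ^ r ≤ (1 + |y|) ^ r := by
  have : |y| ≤ ‖(x + y * I : ℂ)‖ := by simpa using abs_im_le_norm (x + y * I : ℂ)
  exact Real.rpow_le_rpow_of_nonpos (by positivity) (by gcongr) hr

lemma GrowthOn.verticalIntegrable (hr : r < -1) (hf : ContinuousOn f (re ⁻¹' {x}))
    (hgrowth : GrowthOn f (re ⁻¹' {x}) r) : VerticalIntegrable f x := by
  obtain ⟨C, hC, hbound⟩ := hgrowth.exists_norm_le (isClosed_singleton.preimage continuous_re) hf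
  have hcont : Continuous fun y : ℝ => f (x + y * I) :=
    hf.comp_continuous (by fun_prop) fun y => by simp
  refine ((integrable_one_add_abs_rpow hr).const_mul C).mono' hcont.aestronglyMeasurable
    (.of_forall fun y => (hbound _ (by simp)).trans ?_)
  exact mul_le_mul_of_nonneg_left
    (one_add_norm_rpow_le_one_add_abs_im_rpow (by linarith) x y) hC

lemma tendsto_intervalIntegral_verticalIntegral (hf : VerticalIntegrable f x) :
    Tendsto (fun T : ℝ => ∫ y in -T..T, f (x + y * I)) atTop (𝓝 (verticalIntegral f x)) :=
  intervalIntegral_tendsto_integral hf tendsto_neg_atTop_atBot tendsto_id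

lemma tendsto_intervalIntegral_horizontal {l : Filter ℝ} (hr : r < 0) (hx : x₁ ≤ x₂)
    (hl : Tendsto (|·|) l atTop) (hf : ContinuousOn f (re ⁻¹' Icc x₁ x₂))
    (hgrowth : GrowthOn f (re ⁻¹' Icc x₁ x₂) r) :
    Tendsto (fun T : ℝ => ∫ u in x₁..x₂, f (u + T * I)) l (𝓝 0) := by
  obtain ⟨C, hC, hbound⟩ := hgrowth.exists_norm_le (isClosed_Icc.preimage continuous_re) hf
  have hpow : Tendsto (fun T : ℝ => (1 + |T|) ^ r) l (𝓝 0) := by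
    simpa [Function.comp_def] using (tendsto_rpow_neg_atTop (neg_pos.mpr hr)).comp
      (tendsto_atTop_add_const_left _ 1 hl)
  have hlim := (hpow.const_mul C).mul_const |x₂ - x₁|
  rw [mul_zero, zero_mul] at hlim
  refine squeeze_zero_norm (fun T => ?_) hlim
  refine intervalIntegral.norm_integral_le_of_norm_le_const fun u hu => ?_
  have hmem : u ∈ Icc x₁ x₂ := uIcc_of_le hx ▸ uIoc_subset_uIcc hu
  refine (hbound _ (by simpa using hmem)).trans ?_
  exact mul_le_mul_of_nonneg_left (one_add_norm_rpow_le_one_add_abs_im_rpow hr.le u T) hC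

lemma verticalIntegral_eq_of_growthOn (hr : r < -1) (hx : x₁ ≤ x₂)
    (hf : ContinuousOn f (re ⁻¹' Icc x₁ x₂)) (hf' : DifferentiableOn ℂ f (re ⁻¹' Ioo x₁ x₂))
    (hgrowth : GrowthOn f (re ⁻¹' Icc x₁ x₂) r) :
    verticalIntegral f x₁ = verticalIntegral f x₂ := by
  have hvert {x} (h : x ∈ Icc x₁ x₂) := tendsto_intervalIntegral_verticalIntegral <|
    have hsub : re ⁻¹' {x} ⊆ re ⁻¹' Icc x₁ x₂ := preimage_mono (singleton_subset_iff.mpr h)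
    (hgrowth.mono_set hsub).verticalIntegrable hr (hf.mono hsub)
  have htop := tendsto_intervalIntegral_horizontal (by linarith) hx tendsto_abs_atTop_atTop
    hf hgrowth
  have hbot := (tendsto_intervalIntegral_horizontal (by linarith) hx tendsto_abs_atBot_atTop
    hf hgrowth).comp tendsto_neg_atTop_atBot
  have hrect (T : ℝ) : (∫ u in x₁..x₂, f (u + (-T : ℝ) * I)) - (∫ u in x₁..x₂, f (u + T * I)) +
      I • (∫ y in -T..T, f (x₂ + y * I)) - I • (∫ y in -T..T, f (x₁ + y * I)) = 0 := by
    simpa using integral_boundary_rect_eq_zero_of_continuousOn_of_differentiableOn f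
      ⟨x₁, -T⟩ ⟨x₂, T⟩ (hf.mono fun z hz => by simpa [uIcc_of_le hx] using hz.1)
      (hf'.mono fun z hz => by simpa [hx] using hz.1)
  have hlim := ((hbot.sub htop).add ((hvert (right_mem_Icc.mpr hx)).const_smul I)).sub
    ((hvert (left_mem_Icc.mpr hx)).const_smul I)
  have hzero := tendsto_nhds_unique (hlim.congr hrect) tendsto_const_nhds
  rw [sub_zero, zero_add, ← smul_sub, smul_eq_zero_iff_right I_ne_zero, sub_eq_zero] at hzero
  exact hzero.symm

lemma verticalIntegral_eq_zero_of_growthOn (hr : r < -1)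
    (hf : ContinuousOn f (re ⁻¹' Ici x)) (hf' : DifferentiableOn ℂ f (re ⁻¹' Ioi x))
    (hgrowth : GrowthOn f (re ⁻¹' Ici x) r) : verticalIntegral f x = 0 := by
  obtain ⟨C, hC, hbound⟩ := hgrowth.exists_norm_le (isClosed_Ici.preimage continuous_re) hf
  have hshift : ∀ᶠ u in atTop, verticalIntegral f u = verticalIntegral f x := by
    filter_upwards [eventually_ge_atTop x] with u hu
    exact (verticalIntegral_eq_of_growthOn hr hu (hf.mono fun z hz => hz.1)
      (hf'.mono fun z hz => hz.1) (hgrowth.mono_set fun z hz => hz.1)).symm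
  have hlim : Tendsto (verticalIntegral f) atTop (𝓝 (∫ _ : ℝ, 0)) := by
    refine tendsto_integral_filter_of_dominated_convergence (fun y => C * (1 + |y|) ^ r) ?_ ?_
      ((integrable_one_add_abs_rpow hr).const_mul C) (.of_forall fun y => ?_)
    · filter_upwards [eventually_ge_atTop x] with u hu
      exact (hf.comp_continuous (by fun_prop) fun y => by simpa using hu).aestronglyMeasurable
    · filter_upwards [eventually_ge_atTop x] with u hu
      refine .of_forall fun y => (hbound _ (by simpa using hu)).trans ?_
      exact mul_le_mul_of_nonneg_left
        (one_add_norm_rpow_le_one_add_abs_im_rpow (by linarith) u y) hC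
    · refine (hgrowth.tendsto_zero (by linarith)).comp (tendsto_inf.mpr ⟨?_, ?_⟩)
      · exact tendsto_norm_atTop_iff_cobounded.mp <| tendsto_atTop_mono
          (fun u => by simpa using re_le_norm (u + y * I : ℂ)) tendsto_id
      · exact tendsto_principal.mpr <| (eventually_ge_atTop x).mono fun u hu => by simpa using hu
  rw [integral_zero] at hlim
  exact tendsto_nhds_unique (tendsto_const_nhds.congr' <| hshift.mono fun _ h => h.symm) hlim

end VerticalIntegral

/-! ### The smoothing kernel -/

section Perron

variable {c : ℝ}

lemma ofReal_exp_neg_cpow_neg (v : ℝ) (w : ℂ) :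
    ((Real.exp (-v) : ℝ) : ℂ) ^ (-w) = cexp (v * w) := by
  rw [cpow_def_of_ne_zero (by simp), ← ofReal_log (Real.exp_pos _).le, Real.log_exp]
  push_cast
  ring_nf

lemma verticalIntegral_exp_mul_of_hasMellin {φ : ℝ → ℂ} {Φ : ℂ → ℂ}
    (hφ : ∀ s : ℂ, s.re = c → HasMellin φ s (Φ s)) (hΦ : VerticalIntegrable Φ c) {v : ℝ}
    (hcont : ContinuousAt φ (Real.exp (-v))) :
    verticalIntegral (fun w => cexp (v * w) * Φ w) c = 2 * Real.pi * φ (Real.exp (-v)) := by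
  have hmellin (y : ℝ) : mellin φ (c + y * I) = Φ (c + y * I) := (hφ _ (by simp)).2
  have hintegrable : VerticalIntegrable (mellin φ) c := by
    simpa only [VerticalIntegrable, hmellin] using hΦ
  have hinv := mellinInv_mellin_eq c φ (Real.exp_pos (-v)) (hφ c (by simp)).1 hintegrable hcont
  rw [mellinInv] at hinv
  simp only [ofReal_exp_neg_cpow_neg, hmellin, smul_eq_mul] at hinv
  have hpi : (Real.pi : ℂ) ≠ 0 := ofReal_ne_zero.mpr Real.pi_ne_zero
  rw [← hinv, verticalIntegral, real_smul, ← mul_assoc]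
  push_cast
  rw [mul_one_div_cancel (by simp [hpi]), one_mul]

/-- The Mellin transform of `-log` on `(0, 1]` is minus the derivative of that of `1`. -/
lemma hasMellin_indicator_neg_log {s : ℂ} (hs : 0 < s.re) :
    HasMellin ((Set.Ioc 0 1).indicator fun x : ℝ => -(Real.log x : ℂ)) s (s ^ 2)⁻¹ := by
  set f : ℝ → ℂ := (Set.Ioc 0 1).indicator fun _ => 1 with hf
  have hloc : LocallyIntegrableOn f (Ioi 0) :=
    ((integrable_indicator_iff measurableSet_Ioc).mpr
      (integrableOn_const (by simp))).locallyIntegrable.locallyIntegrableOn _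
  have htop : f =O[atTop] fun x : ℝ => x ^ (-(s.re + 1)) := by
    refine .of_bound' ?_
    filter_upwards [eventually_gt_atTop 1] with x hx
    rw [hf, indicator_of_notMem (by simp [hx]), norm_zero]
    exact norm_nonneg _
  have hbot : f =O[𝓝[>] 0] fun x : ℝ => x ^ (-0 : ℝ) := by
    refine .of_bound' <| .of_forall fun x => ?_
    simpa using norm_indicator_le_norm_self (fun _ : ℝ => (1 : ℂ)) x
  obtain ⟨hconv, hderiv⟩ :=
    mellin_hasDerivAt_of_isBigO_rpow hloc htop (by simp) hbot hs
  have hmellin : mellin f =ᶠ[𝓝 s] fun z => z⁻¹ := by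
    filter_upwards [(isOpen_lt continuous_const continuous_re).mem_nhds hs] with z hz
    simpa using (hasMellin_one_Ioc hz).2
  have hs0 : s ≠ 0 := by rintro rfl; simp at hs
  have hval := hderiv.unique ((hasDerivAt_inv hs0).congr_of_eventuallyEq hmellin)
  have hneg := hasMellin_const_smul hconv (-1 : ℝ)
  rw [hval] at hneg
  convert hneg using 1
  · ext x
    by_cases hx : x ∈ Set.Ioc 0 1 <;> simp [hf, hx]
  · simp

lemma eqOn_indicator_neg_log_max :
    EqOn ((Set.Ioc 0 1).indicator fun x : ℝ => -(Real.log x : ℂ))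
      (fun x : ℝ => ((max (-Real.log x) 0 : ℝ) : ℂ)) (Ioi 0) := by
  intro x (hx : 0 < x)
  rcases le_or_gt x 1 with hx1 | hx1
  · simp [hx, hx1, Real.log_nonpos hx.le hx1]
  · simp [hx1.not_ge, (Real.log_pos hx1).le]

lemma hasMellin_indicator_cpow_sub_one {p s : ℂ} (hs : 0 < s.re) (hps : p.re < s.re) :
    HasMellin ((Set.Ioc 0 1).indicator fun x : ℝ => (x : ℂ) ^ (-p) - 1) s
      ((s - p)⁻¹ - s⁻¹) := by
  have hpow := hasMellin_cpow_Ioc (-p) (s := s) (by simpa using hps)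
  have hone := hasMellin_one_Ioc hs
  have hsub := hasMellin_sub hpow.1 hone.1
  rw [hpow.2, hone.2] at hsub
  have hfun : ((Set.Ioc 0 1).indicator fun x : ℝ => (x : ℂ) ^ (-p) - 1) = fun x =>
      (Set.Ioc 0 1).indicator (fun x : ℝ => (x : ℂ) ^ (-p)) x -
        (Set.Ioc 0 1).indicator (fun _ => 1) x := indicator_sub _ _ _
  simpa only [hfun, one_div, ← sub_eq_add_neg] using hsub

lemma ne_of_re_ne {z w : ℂ} (h : z.re ≠ w.re) : z ≠ w := fun hzw => h (congrArg re hzw)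

lemma verticalIntegrable_inv_mul_inv {p q : ℂ} (hp : p.re ≠ c) (hq : q.re ≠ c) :
    VerticalIntegrable (fun w => (w - p)⁻¹ * (w - q)⁻¹) c := by
  have hne {z} (hz : z.re ≠ c) : ∀ w ∈ re ⁻¹' {c}, w - z ≠ 0 := by
    rintro w rfl
    exact sub_ne_zero.mpr (ne_of_re_ne hz.symm)
  refine ((GrowthOn.inv_sub p _).mul (GrowthOn.inv_sub q _)).verticalIntegrable (by norm_num) ?_
  exact ((by fun_prop : ContinuousOn (· - p) _).inv₀ (hne hp)).mul
    ((by fun_prop : ContinuousOn (· - q) _).inv₀ (hne hq))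

lemma verticalIntegrable_inv_sq (hc : 0 < c) : VerticalIntegrable (fun w : ℂ => (w ^ 2)⁻¹) c := by
  have := verticalIntegrable_inv_mul_inv (p := 0) (q := 0) (c := c) (by simpa using hc.ne)
    (by simpa using hc.ne)
  simpa [← mul_inv, ← sq] using this

lemma verticalIntegrable_inv_sub_sub_inv {p : ℂ} (hc : 0 < c) (hp : p.re < c) :
    VerticalIntegrable (fun w => (w - p)⁻¹ - w⁻¹) c := by
  refine verticalIntegrable_congr ?_ <| verticalIntegrable_const_mul p
    (verticalIntegrable_inv_mul_inv (q := 0) hp.ne (by simpa using hc.ne))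
  rintro w rfl
  have hw : w ≠ 0 := ne_of_re_ne hc.ne'
  have hwp : w - p ≠ 0 := sub_ne_zero.mpr (ne_of_re_ne hp.ne')
  simp only [sub_zero]
  field_simp
  ring

lemma verticalIntegral_exp_mul_inv_sq (hc : 0 < c) (v : ℝ) :
    verticalIntegral (fun w => cexp (v * w) * (w ^ 2)⁻¹) c = 2 * Real.pi * max v 0 := by
  have hcont : ContinuousAt (fun x : ℝ => ((max (-Real.log x) 0 : ℝ) : ℂ)) (Real.exp (-v)) :=
    continuous_ofReal.continuousAt.comp <|
      (Real.continuousAt_log (Real.exp_ne_zero (-v))).neg.max (continuousAt_const (y := (0 : ℝ)))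
  have heq := eqOn_indicator_neg_log_max
  rw [verticalIntegral_exp_mul_of_hasMellin (fun s hs => hasMellin_indicator_neg_log (hs ▸ hc))
    (verticalIntegrable_inv_sq hc)
    (hcont.congr (heq.eventuallyEq_of_mem (Ioi_mem_nhds (Real.exp_pos _))).symm),
    heq (Real.exp_pos _)]
  simp

lemma verticalIntegral_exp_mul_inv_sub_sub_inv {p : ℂ} (hc : 0 < c) (hp : p.re < c) {v : ℝ}
    (hv : 0 < v) :
    verticalIntegral (fun w => cexp (v * w) * ((w - p)⁻¹ - w⁻¹)) c =
      2 * Real.pi * (cexp (v * p) - 1) := by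
  have hmem : Real.exp (-v) ∈ Set.Ioo 0 1 := ⟨Real.exp_pos _, by simpa using hv⟩
  have heq : EqOn ((Set.Ioc 0 1).indicator fun x : ℝ => (x : ℂ) ^ (-p) - 1)
      (fun x : ℝ => (x : ℂ) ^ (-p) - 1) (Ioo 0 1) := fun x hx =>
    indicator_of_mem (Ioo_subset_Ioc_self hx) _
  have hcont : ContinuousAt (fun x : ℝ => (x : ℂ) ^ (-p) - 1) (Real.exp (-v)) :=
    (continuousAt_ofReal_cpow_const _ _ (.inr hmem.1.ne')).sub continuousAt_const
  rw [verticalIntegral_exp_mul_of_hasMellin (fun s hs => hasMellin_indicator_cpow_sub_one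
      (hs ▸ hc) (hs ▸ hp)) (verticalIntegrable_inv_sub_sub_inv hc hp)
    (hcont.congr (heq.eventuallyEq_of_mem (isOpen_Ioo.mem_nhds hmem)).symm), heq hmem]
  simp only [ofReal_exp_neg_cpow_neg]

lemma eqOn_inv_sq_mul_inv_sub {p : ℂ} (hc : 0 < c) (hp : p.re < c) (hp0 : p ≠ 0) :
    EqOn (fun w => (p ^ 2)⁻¹ * ((w - p)⁻¹ - w⁻¹) - p⁻¹ * (w ^ 2)⁻¹)
      (fun w => (w ^ 2)⁻¹ * (w - p)⁻¹) (re ⁻¹' {c}) := by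
  rintro w rfl
  have hw : w ≠ 0 := ne_of_re_ne hc.ne'
  have hwp : w - p ≠ 0 := sub_ne_zero.mpr (ne_of_re_ne hp.ne')
  simp only
  field_simp
  ring

lemma verticalIntegrable_inv_sq_mul_inv_sub {p : ℂ} (hc : 0 < c) (hp : p.re < c) (hp0 : p ≠ 0) :
    VerticalIntegrable (fun w => (w ^ 2)⁻¹ * (w - p)⁻¹) c :=
  verticalIntegrable_congr (eqOn_inv_sq_mul_inv_sub hc hp hp0) <| verticalIntegrable_sub
    (verticalIntegrable_const_mul _ (verticalIntegrable_inv_sub_sub_inv hc hp))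
    (verticalIntegrable_const_mul _ (verticalIntegrable_inv_sq hc))

lemma verticalIntegral_exp_mul_inv_sq_mul_inv_sub {p : ℂ} (hc : 0 < c) (hp : p.re < c)
    (hp0 : p ≠ 0) {v : ℝ} (hv : 0 < v) :
    verticalIntegral (fun w => cexp (v * w) * ((w ^ 2)⁻¹ * (w - p)⁻¹)) c =
      2 * Real.pi * ((cexp (v * p) - 1) / p ^ 2 - v / p) := by
  have hpartial : EqOn (fun w => cexp (v * w) * ((w ^ 2)⁻¹ * (w - p)⁻¹))
      (fun w => (p ^ 2)⁻¹ * (cexp (v * w) * ((w - p)⁻¹ - w⁻¹)) -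
        p⁻¹ * (cexp (v * w) * (w ^ 2)⁻¹)) (re ⁻¹' {c}) := fun w hw => by
    simp only [← eqOn_inv_sq_mul_inv_sub hc hp hp0 hw]
    ring
  rw [verticalIntegral_congr hpartial, verticalIntegral_sub, verticalIntegral_const_mul,
    verticalIntegral_const_mul, verticalIntegral_exp_mul_inv_sub_sub_inv hc hp hv,
    verticalIntegral_exp_mul_inv_sq hc, max_eq_left hv.le]
  · ring
  · exact verticalIntegrable_const_mul _
      (verticalIntegrable_exp_mul v (verticalIntegrable_inv_sub_sub_inv hc hp))
  · exact verticalIntegrable_const_mul _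
      (verticalIntegrable_exp_mul v (verticalIntegrable_inv_sq hc))

end Perron

/-- The kernel `(e^{2Lw} - e^{Lw}) / (L w²)`. For `L = log X`, integrating it against `n^{-w}` along
a vertical line produces the weights `w_X(n)`. -/
def smoothingKernel (L : ℝ) (w : ℂ) : ℂ := (cexp (2 * L * w) - cexp (L * w)) / (w ^ 2 * L)

section SmoothingKernel

variable {L c : ℝ}

lemma smoothingKernel_mul_eq (L : ℝ) (f : ℂ → ℂ) (w : ℂ) :
    smoothingKernel L w * f w = (L : ℂ)⁻¹ * (cexp (((2 * L : ℝ) : ℂ) * w) * ((w ^ 2)⁻¹ * f w) -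
      cexp (L * w) * ((w ^ 2)⁻¹ * f w)) := by
  simp only [smoothingKernel, div_eq_mul_inv, mul_inv]
  push_cast
  ring

lemma verticalIntegral_smoothingKernel_mul {f : ℂ → ℂ}
    (hf : VerticalIntegrable (fun w => (w ^ 2)⁻¹ * f w) c) :
    verticalIntegral (fun w => smoothingKernel L w * f w) c =
      (L : ℂ)⁻¹ * (verticalIntegral (fun w => cexp ((2 * L : ℝ) * w) * ((w ^ 2)⁻¹ * f w)) c -
        verticalIntegral (fun w => cexp (L * w) * ((w ^ 2)⁻¹ * f w)) c) := by
  simp only [smoothingKernel_mul_eq]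
  rw [verticalIntegral_const_mul, verticalIntegral_sub (verticalIntegrable_exp_mul _ hf)
    (verticalIntegrable_exp_mul _ hf)]

lemma verticalIntegral_smoothingKernel_mul_exp (hc : 0 < c) (L u : ℝ) :
    verticalIntegral (fun w => smoothingKernel L w * cexp (-(u * w))) c =
      2 * Real.pi * ((max (2 * L - u) 0 - max (L - u) 0) / L : ℝ) := by
  have hintegrable : VerticalIntegrable (fun w => (w ^ 2)⁻¹ * cexp (-(u * w))) c := by
    simpa [mul_comm] using verticalIntegrable_exp_mul (-u) (verticalIntegrable_inv_sq hc)
  have hexp (v : ℝ) (w : ℂ) : cexp (v * w) * ((w ^ 2)⁻¹ * cexp (-(u * w))) =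
      cexp (((v - u : ℝ) : ℂ) * w) * (w ^ 2)⁻¹ := by
    rw [mul_left_comm, ← Complex.exp_add, mul_comm]
    push_cast
    ring_nf
  rw [verticalIntegral_smoothingKernel_mul hintegrable]
  simp only [hexp, verticalIntegral_exp_mul_inv_sq hc]
  push_cast
  ring

lemma verticalIntegral_smoothingKernel (hc : 0 < c) (hL : 0 < L) :
    verticalIntegral (smoothingKernel L) c = 2 * Real.pi := by
  have hval : (max (2 * L - 0) 0 - max (L - 0) 0) / L = 1 := by
    rw [max_eq_left (by linarith), max_eq_left (by linarith)]
    field_simp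
    ring
  simpa only [hval, ofReal_zero, zero_mul, neg_zero, Complex.exp_zero, mul_one, ofReal_one]
    using verticalIntegral_smoothingKernel_mul_exp hc L 0

lemma verticalIntegral_smoothingKernel_mul_inv_sub {p : ℂ} (hc : 0 < c) (hL : 0 < L)
    (hp : p.re < c) (hp0 : p ≠ 0) :
    verticalIntegral (fun w => smoothingKernel L w * (w - p)⁻¹) c =
      2 * Real.pi * (smoothingKernel L p - p⁻¹) := by
  have hLC : (L : ℂ) ≠ 0 := ofReal_ne_zero.mpr hL.ne'
  rw [verticalIntegral_smoothingKernel_mul (verticalIntegrable_inv_sq_mul_inv_sub hc hp hp0),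
    verticalIntegral_exp_mul_inv_sq_mul_inv_sub hc hp hp0 (by linarith),
    verticalIntegral_exp_mul_inv_sq_mul_inv_sub hc hp hp0 hL, smoothingKernel]
  push_cast
  field_simp
  ring

end SmoothingKernel

section KernelEstimates

variable {L b r : ℝ} {H : ℂ → ℂ}

lemma growthOn_exp_mul (hL : 0 ≤ L) (x : ℝ) :
    GrowthOn (fun w => cexp (L * w)) (re ⁻¹' Iic x) 0 := by
  refine .of_norm_le (C := Real.exp (L * x)) fun w (hw : w.re ≤ x) => ?_
  rw [norm_exp, re_ofReal_mul]
  gcongr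

lemma growthOn_exp_two_mul_sub_exp (hL : 0 ≤ L) (x : ℝ) :
    GrowthOn (fun w => cexp (2 * L * w) - cexp (L * w)) (re ⁻¹' Iic x) 0 := by
  have h := growthOn_exp_mul (L := 2 * L) (by positivity) x
  push_cast at h
  exact IsBigO.sub h (growthOn_exp_mul hL x)

lemma growthOn_smoothingKernel (hL : 0 ≤ L) (x : ℝ) :
    GrowthOn (smoothingKernel L) (re ⁻¹' Iic x) (-2) := by
  have h := ((growthOn_exp_two_mul_sub_exp hL x).mul (.const (L : ℂ)⁻¹ _)).mul
    ((GrowthOn.inv_sub 0 _).mul (.inv_sub 0 _))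
  norm_num at h
  refine IsBigO.congr_left h fun w => ?_
  rw [smoothingKernel, div_eq_mul_inv, mul_inv, sq, mul_inv]
  ring

lemma differentiableOn_smoothingKernel {U : Set ℂ} (hL : L ≠ 0) (hU : 0 ∉ U) :
    DifferentiableOn ℂ (smoothingKernel L) U := by
  refine .div (by fun_prop) (by fun_prop) fun w hw => ?_
  have : w ≠ 0 := ne_of_mem_of_not_mem hw hU
  simp [this, hL]

lemma verticalIntegrable_smoothingKernel_mul {f : ℂ → ℂ} {x : ℝ} (hL : 0 < L) (hx : x ≠ 0)
    (hr : r < 1) (hf : ContinuousOn f (re ⁻¹' {x})) (hgrowth : GrowthOn f (re ⁻¹' {x}) r) :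
    VerticalIntegrable (fun w => smoothingKernel L w * f w) x :=
  GrowthOn.verticalIntegrable (by linarith)
    ((differentiableOn_smoothingKernel hL.ne' (by simpa using hx.symm)).continuousOn.mul hf)
    (((growthOn_smoothingKernel hL.le x).mono_set (preimage_mono (by simp))).mul hgrowth)

lemma smoothingKernel_conj (L : ℝ) (w : ℂ) :
    smoothingKernel L (conj w) = conj (smoothingKernel L w) := by
  simp [smoothingKernel, ← exp_conj, map_ofNat]

lemma verticalIntegral_smoothingKernel_mul_conj (hL : 0 < L) (hb : 0 < b) (hr : r < 1)
    (hH : DifferentiableOn ℂ H (re ⁻¹' Ici (-b))) (hgrowth : GrowthOn H (re ⁻¹' Ici (-b)) r) :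
    verticalIntegral (fun w => smoothingKernel L w * conj (H w)) (-b) = 0 := by
  have hmaps : MapsTo (fun w : ℂ => -(2 * b : ℝ) + -w) (re ⁻¹' Ici (-b)) (re ⁻¹' Iic (-b)) := by
    intro w (hw : -b ≤ w.re)
    rw [Set.mem_preimage, Set.mem_Iic, add_re, neg_re, neg_re, ofReal_re]
    linarith
  have hdiff : DifferentiableOn ℂ (fun w => smoothingKernel L (-(2 * b : ℝ) + -w) * H w)
      (re ⁻¹' Ici (-b)) :=
    ((differentiableOn_smoothingKernel hL.ne' (by simpa)).comp
      (differentiableOn_id.neg.const_add (c := (-(2 * b : ℝ) : ℂ))) hmaps).mul hH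
  have hkernel : GrowthOn (fun w => smoothingKernel L (-(2 * b : ℝ) + -w)) (re ⁻¹' Ici (-b)) (-2) :=
    ((growthOn_smoothingKernel hL.le (-b)).comp_const_add (-(2 * b : ℝ)) (T := re ⁻¹' Iic b)
      fun w hw => by simpa using hmaps (show -w ∈ re ⁻¹' Ici (-b) by simpa using hw)).comp_neg
      fun w hw => by simpa [neg_le] using hw
  have hreflect := verticalIntegral_eq_zero_of_growthOn (by linarith) hdiff.continuousOn
    (hdiff.mono <| preimage_mono Ioi_subset_Ici_self) (hkernel.mul hgrowth)
  rw [← map_zero conj, ← hreflect, verticalIntegral, verticalIntegral, ← integral_conj]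
  congr 1 with y
  have hconj : -(2 * b : ℝ) + -((-b : ℝ) + y * I) = conj ((-b : ℝ) + y * I : ℂ) := by
    simp only [map_add, map_mul, conj_ofReal, conj_I]
    push_cast
    ring
  rw [hconj, smoothingKernel_conj, map_mul, conj_conj]

end KernelEstimates

section Poisson

variable {L b r : ℝ} {H : ℂ → ℂ}

lemma integral_poisson (hb : 0 < b) : ∫ y : ℝ, b / (b ^ 2 + y ^ 2) = Real.pi := by
  have hscale (y : ℝ) : b / (b ^ 2 + y ^ 2) = b⁻¹ * (1 + (y / b) ^ 2)⁻¹ := by field_simp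
  simp only [hscale]
  rw [integral_const_mul, Measure.integral_comp_div (fun y : ℝ => (1 + y ^ 2)⁻¹) b,
    integral_univ_inv_one_add_sq, abs_of_pos hb, smul_eq_mul, inv_mul_cancel_left₀ hb.ne']

lemma integrable_poisson (hb : 0 < b) : Integrable fun y : ℝ => b / (b ^ 2 + y ^ 2) :=
  .of_integral_ne_zero <| (integral_poisson hb).symm ▸ Real.pi_ne_zero

section HalfPlane

variable (hb : 0 < b) (hr0 : 0 ≤ r) (hr1 : r < 1) (hH : DifferentiableOn ℂ H (re ⁻¹' Ici (-b)))
  (hgrowth : GrowthOn H (re ⁻¹' Ici (-b)) r)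

include hb hH in
lemma differentiableOn_dslope_mul_inv :
    DifferentiableOn ℂ (fun w => dslope H 0 w * (w - (-2 * b : ℝ))⁻¹) (re ⁻¹' Ici (-b)) := by
  have hnhds : re ⁻¹' Ici (-b) ∈ 𝓝 (0 : ℂ) :=
    continuous_re.continuousAt.preimage_mem_nhds <| Ici_mem_nhds (by simpa)
  refine ((differentiableOn_dslope hnhds).mpr hH).mul (.inv (by fun_prop) ?_)
  intro w (hw : -b ≤ w.re)
  refine sub_ne_zero.mpr (ne_of_re_ne ?_)
  rw [ofReal_re]
  linarith

include hb hr0 hr1 hH hgrowth in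
lemma verticalIntegrable_dslope_mul_inv :
    VerticalIntegrable (fun w => dslope H 0 w * (w - (-2 * b : ℝ))⁻¹) (-b) := by
  have hsub : re ⁻¹' {-b} ⊆ re ⁻¹' Ici (-b) := preimage_mono (by simp)
  exact GrowthOn.verticalIntegrable (by linarith)
    ((differentiableOn_dslope_mul_inv hb hH).continuousOn.mono hsub)
    (((hgrowth.dslope hr0 0).mul (.inv_sub _ _)).mono_set hsub)

include hb hr0 hr1 hH hgrowth in
lemma verticalIntegral_dslope_mul_inv :
    verticalIntegral (fun w => dslope H 0 w * (w - (-2 * b : ℝ))⁻¹) (-b) = 0 :=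
  have hdiff := differentiableOn_dslope_mul_inv hb hH
  verticalIntegral_eq_zero_of_growthOn (by linarith) hdiff.continuousOn
    (hdiff.mono <| preimage_mono Ioi_subset_Ici_self) ((hgrowth.dslope hr0 0).mul (.inv_sub _ _))

include hb in
lemma poisson_mul_eq (y : ℝ) :
    ((b / (b ^ 2 + y ^ 2) : ℝ) : ℂ) * H ((-b : ℝ) + y * I) = (b / (b ^ 2 + y ^ 2) : ℝ) * H 0 -
      b * (dslope H 0 ((-b : ℝ) + y * I) * (((-b : ℝ) + y * I) - (-2 * b : ℝ))⁻¹) := by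
  set w : ℂ := (-b : ℝ) + y * I with hw
  have hw0 : w ≠ 0 := ne_of_re_ne (by simpa [hw] using hb.ne')
  have : w - (-2 * b : ℝ) ≠ 0 := sub_ne_zero.mpr (ne_of_re_ne (by simp [hw]; linarith))
  have hfactor : ((b ^ 2 + y ^ 2 : ℝ) : ℂ) = -(w * (w - (-2 * b : ℝ))) := by
    rw [hw]
    push_cast
    linear_combination (y ^ 2 : ℂ) * I_sq
  rw [dslope_of_ne _ hw0, slope_def_field, ofReal_div, hfactor]
  field_simp
  ring

include hb hr0 hr1 hH hgrowth in
lemma integrable_poisson_mul :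
    Integrable fun y : ℝ => ((b / (b ^ 2 + y ^ 2) : ℝ) : ℂ) * H ((-b : ℝ) + y * I) := by
  simp only [poisson_mul_eq hb]
  exact ((integrable_poisson hb).ofReal.mul_const (H 0)).sub
    ((verticalIntegrable_dslope_mul_inv hb hr0 hr1 hH hgrowth).const_mul _)

include hb hr0 hr1 hH hgrowth in
lemma integral_poisson_mul :
    ∫ y : ℝ, ((b / (b ^ 2 + y ^ 2) : ℝ) : ℂ) * H ((-b : ℝ) + y * I) = Real.pi * H 0 := by
  have hvert := (verticalIntegrable_dslope_mul_inv hb hr0 hr1 hH hgrowth).const_mul (b : ℂ)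
  simp only [poisson_mul_eq hb]
  refine (integral_sub ((integrable_poisson hb).ofReal.mul_const (H 0)) hvert).trans ?_
  rw [integral_const_mul, integral_mul_const, integral_ofReal, integral_poisson hb]
  have hzero := verticalIntegral_dslope_mul_inv hb hr0 hr1 hH hgrowth
  rw [verticalIntegral] at hzero
  rw [hzero, mul_zero, sub_zero]
  rfl

lemma norm_smoothingKernel_le (hL : 0 < L) (hbL : b * L = 2) (y : ℝ) :
    ‖smoothingKernel L ((-b : ℝ) + y * I)‖ ≤ 2⁻¹ * (b / (b ^ 2 + y ^ 2)) := by
  have hb : 0 < b := by nlinarith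
  set w : ℂ := (-b : ℝ) + y * I with hw
  have hexp : ‖cexp (2 * L * w) - cexp (L * w)‖ ≤ 1 := by
    have hnorm (v : ℝ) : ‖cexp (v * w)‖ = Real.exp (-(v * b)) := by simp [norm_exp, hw]
    have htwo : Real.exp (-2) ≤ 2⁻¹ := by
      rw [Real.exp_neg]
      gcongr
      linarith [Real.add_one_le_exp 2]
    have hfour : Real.exp (-4) ≤ Real.exp (-2) := by gcongr; norm_num
    calc ‖cexp (2 * L * w) - cexp (L * w)‖
        ≤ ‖cexp ((2 * L : ℝ) * w)‖ + ‖cexp (L * w)‖ := by push_cast; exact norm_sub_le _ _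
      _ = Real.exp (-4) + Real.exp (-2) := by
        rw [hnorm, hnorm, show 2 * L * b = 4 by linarith, show L * b = 2 by linarith]
      _ ≤ 1 := by linarith
  have hsq : ‖w ^ 2‖ = b ^ 2 + y ^ 2 := by
    rw [norm_pow, Complex.sq_norm, normSq_apply]
    simp [hw, sq]
  rw [smoothingKernel, norm_div, norm_mul, hsq, norm_real, Real.norm_of_nonneg hL.le,
    div_le_iff₀ (by positivity)]
  calc ‖cexp (2 * L * w) - cexp (L * w)‖ ≤ 1 := hexp
    _ = 2⁻¹ * (b / (b ^ 2 + y ^ 2)) * ((b ^ 2 + y ^ 2) * L) := by field_simp; linarith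

include hr1 hH hgrowth in
lemma verticalIntegral_smoothingKernel_mul_eq_two_re (hL : 0 < L) (hb : 0 < b) :
    verticalIntegral (fun w => smoothingKernel L w * H w) (-b) =
      verticalIntegral (fun w => smoothingKernel L w * (2 * (H w).re : ℝ)) (-b) := by
  have hsub : re ⁻¹' {-b} ⊆ re ⁻¹' Ici (-b) := preimage_mono (by simp)
  have hcont := hH.continuousOn.mono hsub
  have hintegrable := verticalIntegrable_smoothingKernel_mul hL (neg_ne_zero.mpr hb.ne') hr1 hcont
    (hgrowth.mono_set hsub)
  have hintegrable_conj := verticalIntegrable_smoothingKernel_mul (f := fun w => conj (H w)) hL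
    (neg_ne_zero.mpr hb.ne') hr1 (continuous_conj.comp_continuousOn hcont)
    (IsBigO.of_norm_left <| by simpa using (hgrowth.mono_set hsub).norm_left)
  rw [← add_zero (verticalIntegral _ _),
    ← verticalIntegral_smoothingKernel_mul_conj hL hb hr1 hH hgrowth,
    ← verticalIntegral_add hintegrable hintegrable_conj]
  simp only [← mul_add, add_conj]

include hr0 hr1 hH hgrowth in
/-- By `verticalIntegral_smoothingKernel_mul_eq_two_re` the integrand may be taken to be
`2 * re H` times the kernel, and on the line the kernel is at most half the Poisson kernel. -/
lemma norm_verticalIntegral_smoothingKernel_mul_le (hL : 0 < L) (hbL : b * L = 2)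
    (hre : ∀ y : ℝ, 0 ≤ (H ((-b : ℝ) + y * I)).re) :
    ‖verticalIntegral (fun w => smoothingKernel L w * H w) (-b)‖ ≤ Real.pi * (H 0).re := by
  have hb : 0 < b := by nlinarith
  have hintegrable := integrable_poisson_mul hb hr0 hr1 hH hgrowth
  have hpoisson := (integral_re hintegrable).trans <|
    congrArg re (integral_poisson_mul hb hr0 hr1 hH hgrowth)
  rw [re_ofReal_mul] at hpoisson
  rw [verticalIntegral_smoothingKernel_mul_eq_two_re hr1 hH hgrowth hL hb, ← hpoisson]
  refine norm_integral_le_of_norm_le hintegrable.re (.of_forall fun y => ?_)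
  rw [norm_mul, norm_real, Real.norm_of_nonneg (mul_nonneg zero_le_two (hre y)),
    RCLike.re_eq_complex_re, re_ofReal_mul]
  calc _ ≤ 2⁻¹ * (b / (b ^ 2 + y ^ 2)) * (2 * (H ((-b : ℝ) + y * I)).re) := by
        gcongr
        · exact mul_nonneg zero_le_two (hre y)
        · exact norm_smoothingKernel_le hL hbL y
    _ = _ := by ring

end HalfPlane

end Poisson

section Shift

variable {b c r L : ℝ} {F : ℂ → ℂ}

lemma verticalIntegral_smoothingKernel_eq_zero (hL : 0 < L) (hb : 0 < b) :
    verticalIntegral (smoothingKernel L) (-b) = 0 := by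
  simpa using verticalIntegral_smoothingKernel_mul_conj (H := fun _ => 1) hL hb one_pos
    (differentiableOn_const _) ((GrowthOn.const 1 _))

lemma smoothingKernel_mul_eq_add (L : ℝ) (F : ℂ → ℂ) {w : ℂ} (hw : w ≠ 0) :
    smoothingKernel L w * F w = F 0 * smoothingKernel L w +
      (L : ℂ)⁻¹ * (dslope (fun w => cexp (2 * L * w) - cexp (L * w)) 0 w * dslope F 0 w) := by
  rw [dslope_of_ne _ hw, dslope_of_ne _ hw, slope_def_field, slope_def_field, smoothingKernel]
  simp only [mul_zero, exp_zero, sub_self, sub_zero]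
  field_simp
  ring

lemma verticalIntegral_smoothingKernel_mul_shift (hL : 0 < L) (hb : 0 < b) (hc : 0 < c)
    (hr0 : 0 ≤ r) (hr1 : r < 1) (hF : DifferentiableOn ℂ F (re ⁻¹' Icc (-b) c))
    (hgrowth : GrowthOn F (re ⁻¹' Icc (-b) c) r) :
    verticalIntegral (fun w => smoothingKernel L w * F w) c =
      verticalIntegral (fun w => smoothingKernel L w * F w) (-b) + 2 * Real.pi * F 0 := by
  set A : ℂ → ℂ := fun w => dslope (fun w => cexp (2 * L * w) - cexp (L * w)) 0 w * dslope F 0 w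
  have hdiff : DifferentiableOn ℂ A (re ⁻¹' Icc (-b) c) := by
    refine .mul ?_ ((differentiableOn_dslope ?_).mpr hF)
    · exact ((differentiableOn_dslope univ_mem).mpr (by fun_prop)).mono (subset_univ _)
    · exact continuous_re.continuousAt.preimage_mem_nhds <| Icc_mem_nhds (by simpa) (by simpa)
  have hA : GrowthOn A (re ⁻¹' Icc (-b) c) (0 - 1 + (r - 1)) :=
    (((growthOn_exp_two_mul_sub_exp hL.le c).dslope le_rfl 0).mono_set
      (preimage_mono Icc_subset_Iic_self)).mul (hgrowth.dslope hr0 0)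
  have hline {x : ℝ} (hx : x ≠ 0) (hmem : x ∈ Icc (-b) c) :
      verticalIntegral (fun w => smoothingKernel L w * F w) x =
        F 0 * verticalIntegral (smoothingKernel L) x + (L : ℂ)⁻¹ * verticalIntegral A x := by
    have hsub : re ⁻¹' {x} ⊆ re ⁻¹' Icc (-b) c := preimage_mono (by simpa using hmem)
    have hintegrable : VerticalIntegrable (smoothingKernel L) x := by
      simpa using verticalIntegrable_smoothingKernel_mul hL hx one_pos continuousOn_const
        (.const 1 _)
    rw [← verticalIntegral_const_mul, ← verticalIntegral_const_mul, ← verticalIntegral_add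
      (verticalIntegrable_const_mul _ hintegrable) (verticalIntegrable_const_mul _ <|
        (hA.mono_set hsub).verticalIntegrable (by linarith) (hdiff.continuousOn.mono hsub))]
    exact verticalIntegral_congr fun w (hw : w.re = x) =>
      smoothingKernel_mul_eq_add L F <| ne_of_re_ne (by simpa [hw])
  have hAeq := verticalIntegral_eq_of_growthOn (by linarith) (by linarith) hdiff.continuousOn
    (hdiff.mono <| preimage_mono Ioo_subset_Icc_self) hA
  rw [hline hc.ne' ⟨by linarith, le_rfl⟩, hline (by linarith) ⟨le_rfl, by linarith⟩, hAeq,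
    verticalIntegral_smoothingKernel hc hL, verticalIntegral_smoothingKernel_eq_zero hL hb]
  ring

end Shift

section DirichletSeries

variable {c L : ℝ} {s : ℂ} {a : ℕ → ℂ}

lemma term_add_eq_mul_exp (a : ℕ → ℂ) (s w : ℂ) (n : ℕ) :
    LSeries.term a (s + w) n = LSeries.term a s n * cexp (-(Real.log n * w)) := by
  rcases eq_or_ne n 0 with rfl | hn
  · simp
  · have hn' : (n : ℂ) ≠ 0 := Nat.cast_ne_zero.mpr hn
    rw [LSeries.term_of_ne_zero hn, LSeries.term_of_ne_zero hn, cpow_add _ _ hn',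
      div_mul_eq_div_div, div_eq_mul_inv _ ((n : ℂ) ^ w), ← cpow_neg, cpow_def_of_ne_zero hn' (-w),
      natCast_log, mul_neg]

lemma verticalIntegral_smoothingKernel_mul_LSeries (hL : 0 < L) (hc : 0 < c)
    (ha : LSeriesSummable a (s + c)) :
    verticalIntegral (fun w => smoothingKernel L w * LSeries a (s + w)) c =
      2 * Real.pi * ∑' n : ℕ, LSeries.term a s n *
        ((max (2 * L - Real.log n) 0 - max (L - Real.log n) 0) / L : ℝ) := by
  have hkernel : VerticalIntegrable (smoothingKernel L) c := by
    simpa using verticalIntegrable_smoothingKernel_mul hL hc.ne' one_pos continuousOn_const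
      (.const 1 _)
  have hcont (n : ℕ) : Continuous fun y : ℝ => LSeries.term a (s + (c + y * I)) n := by
    simp only [term_add_eq_mul_exp]
    fun_prop
  have hnorm (n : ℕ) (y : ℝ) :
      ‖LSeries.term a (s + (c + y * I)) n‖ = ‖LSeries.term a (s + c) n‖ := by
    simp [LSeries.norm_term_eq]
  have hintegrable (n : ℕ) : Integrable fun y : ℝ =>
      smoothingKernel L (c + y * I) * LSeries.term a (s + (c + y * I)) n :=
    Integrable.mul_bdd hkernel (hcont n).aestronglyMeasurable (.of_forall fun y => (hnorm n y).le)
  have hterm (n : ℕ) :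
      ∫ y : ℝ, smoothingKernel L (c + y * I) * LSeries.term a (s + (c + y * I)) n =
        2 * Real.pi * (LSeries.term a s n *
          ((max (2 * L - Real.log n) 0 - max (L - Real.log n) 0) / L : ℝ)) := by
    have h := verticalIntegral_smoothingKernel_mul_exp hc L (Real.log n)
    rw [verticalIntegral] at h
    simp only [term_add_eq_mul_exp, mul_left_comm _ (LSeries.term a s n)]
    rw [integral_const_mul, h, mul_left_comm]
  have hsum : Summable fun n : ℕ =>
      ∫ y : ℝ, ‖smoothingKernel L (c + y * I) * LSeries.term a (s + (c + y * I)) n‖ := by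
    simp only [norm_mul, hnorm, integral_mul_const]
    exact ha.norm.mul_left _
  have htsum := integral_tsum_of_summable_integral_norm hintegrable hsum
  simp only [hterm, tsum_mul_left] at htsum
  exact htsum.symm

end DirichletSeries

/-- The Dirichlet polynomial `∑_{n ≤ X²} Λ_X(n) χ(n) n^{-σ₁-it}` whose absolute value is the main
term of `EchiT χ X t`. -/
def vonMangoldtPolynomial {N : ℕ} (χ : DirichletCharacter ℂ N) (X t : ℝ) : ℂ :=
  ∑ m ∈ Finset.Icc 1 ⌊X ^ 2⌋₊,
    (LambdaX X m : ℂ) * χ (m : ZMod N) * (m : ℂ) ^ (-(sigma1 X : ℂ) - I * t)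

lemma EchiT_eq {N : ℕ} (χ : DirichletCharacter ℂ N) (X t : ℝ) :
    EchiT χ X t = ‖vonMangoldtPolynomial χ X t‖ + Real.log (N * (1 + |t|)) :=
  rfl

section VonMangoldt

variable {M : ℕ} {X : ℝ}

lemma max_sub_max_div_log_eq_wX (hX : 1 < X) {n : ℕ} (hn : n ≠ 0) :
    (max (2 * Real.log X - Real.log n) 0 - max (Real.log X - Real.log n) 0) / Real.log X =
      if (n : ℝ) ≤ X ^ 2 then wX X n else 0 := by
  have hL : 0 < Real.log X := Real.log_pos hX
  have hn0 : (0 : ℝ) < n := by positivity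
  have hle (k : ℕ) : (n : ℝ) ≤ X ^ k ↔ Real.log n ≤ k * Real.log X := by
    rw [← Real.log_pow, Real.log_le_log_iff hn0 (by positivity)]
  have hle1 := hle 1
  simp only [pow_one, Nat.cast_one, one_mul] at hle1
  simp only [hle, wX, hle1, Real.log_div (by positivity : X ^ 2 ≠ 0) hn0.ne', Real.log_pow]
  push_cast
  split_ifs with h2 h1
  · rw [max_eq_left (by linarith), max_eq_left (by linarith)]
    field_simp
    ring
  · rw [max_eq_left (by linarith), max_eq_right (by linarith), sub_zero]
  · rw [max_eq_right (by linarith), max_eq_right (by linarith), sub_zero, zero_div]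

lemma tsum_term_vonMangoldt_mul (χ : DirichletCharacter ℂ M) (hX : 1 < X) (t : ℝ) :
    ∑' n : ℕ, LSeries.term
        ((fun n : ℕ => χ n) * fun n : ℕ => (ArithmeticFunction.vonMangoldt n : ℂ))
        (sigma1 X + I * t) n *
          ((max (2 * Real.log X - Real.log n) 0 - max (Real.log X - Real.log n) 0) /
            Real.log X : ℝ) =
      vonMangoldtPolynomial χ X t := by
  have hmem {n : ℕ} (hn : n ≠ 0) : n ∈ Finset.Icc 1 ⌊X ^ 2⌋₊ ↔ (n : ℝ) ≤ X ^ 2 := by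
    rw [Finset.mem_Icc, Nat.le_floor_iff (by positivity), and_iff_right (by omega)]
  rw [vonMangoldtPolynomial, tsum_eq_sum (s := Finset.Icc 1 ⌊X ^ 2⌋₊) fun n hn => ?_]
  · refine Finset.sum_congr rfl fun n hn => ?_
    have hn0 : n ≠ 0 := by have := (Finset.mem_Icc.mp hn).1; omega
    rw [max_sub_max_div_log_eq_wX hX hn0, if_pos ((hmem hn0).mp hn), LSeries.term_of_ne_zero hn0,
      LambdaX, ← neg_add', cpow_neg, div_eq_mul_inv, Pi.mul_apply]
    push_cast
    ring
  · rcases eq_or_ne n 0 with rfl | hn0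
    · simp
    · rw [max_sub_max_div_log_eq_wX hX hn0, if_neg (mt (hmem hn0).mpr hn), ofReal_zero, mul_zero]

lemma logDeriv_LFunction_eq_neg_LSeries [NeZero M] (χ : DirichletCharacter ℂ M) {s : ℂ}
    (hs : 1 < s.re) :
    logDeriv (LFunction χ) s =
      -LSeries ((fun n : ℕ => χ n) * fun n : ℕ => (ArithmeticFunction.vonMangoldt n : ℂ)) s := by
  rw [logDeriv_apply, deriv_LFunction_eq_deriv_LSeries χ hs, LFunction_eq_LSeries χ hs,
    LSeries_twist_vonMangoldt_eq χ hs, neg_div, neg_neg]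

lemma verticalIntegral_smoothingKernel_mul_logDeriv_LFunction [NeZero M]
    (χ : DirichletCharacter ℂ M) (hX : 1 < X) (t : ℝ) :
    verticalIntegral (fun w =>
        smoothingKernel (Real.log X) w * logDeriv (LFunction χ) (sigma1 X + I * t + w)) 1 =
      -(2 * Real.pi * vonMangoldtPolynomial χ X t) := by
  have hL : 0 < Real.log X := Real.log_pos hX
  have hs : 1 < (sigma1 X + I * t + (1 : ℝ)).re := by
    simpa [sigma1] using add_pos (one_half_pos (α := ℝ)) (div_pos four_pos hL)
  rw [← tsum_term_vonMangoldt_mul χ hX, ← verticalIntegral_smoothingKernel_mul_LSeries hL one_pos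
    (LSeriesSummable_twist_vonMangoldt χ hs), verticalIntegral, verticalIntegral, ← integral_neg]
  congr 1 with y
  rw [logDeriv_LFunction_eq_neg_LSeries χ (by simpa using hs), mul_neg]

end VonMangoldt

/-! ### The gamma factor and logarithmic derivatives in half-planes -/

lemma ne_neg_natCast_of_re_pos {z : ℂ} (hz : 0 < z.re) (m : ℕ) : z ≠ -m := by
  rintro rfl
  simp only [neg_re, natCast_re, Left.neg_pos_iff] at hz
  exact hz.not_ge m.cast_nonneg

lemma hasDerivAt_Gamma_of_re_pos {z : ℂ} (hz : 0 < z.re) :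
    HasDerivAt Gamma (deriv Gamma z) z :=
  (differentiableAt_Gamma z (ne_neg_natCast_of_re_pos hz)).hasDerivAt

lemma norm_one_sub_cpow_le {u : ℂ} (hu : 1 ≤ u.re) {y : ℝ} (hy : 0 < y) (hy1 : y ≤ 1) :
    ‖1 - (y : ℂ) ^ u‖ ≤ ‖u‖ * (1 - y) := by
  have hderiv (x : ℝ) (hx : x ∈ Set.Icc y 1) :
      HasDerivWithinAt (fun x : ℝ => (x : ℂ) ^ u) (u * (x : ℂ) ^ (u - 1)) (Set.Icc y 1) x := by
    have hslit : (x : ℂ) ∈ slitPlane := ofReal_mem_slitPlane.mpr (hy.trans_le hx.1)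
    have hcpow : HasDerivAt (fun w : ℂ => w ^ u) (u * (x : ℂ) ^ (u - 1)) x := by
      simpa using (hasDerivAt_id (x : ℂ)).cpow_const (c := u) hslit
    exact hcpow.comp_ofReal.hasDerivWithinAt
  have hbound (x : ℝ) (hx : x ∈ Set.Icc y 1) : ‖u * (x : ℂ) ^ (u - 1)‖ ≤ ‖u‖ := by
    have hx0 : 0 < x := hy.trans_le hx.1
    rw [norm_mul, norm_cpow_eq_rpow_re_of_pos hx0]
    exact mul_le_of_le_one_right (norm_nonneg _) <|
      Real.rpow_le_one hx0.le hx.2 (by simpa using hu)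
  simpa [Real.norm_of_nonneg (sub_nonneg.mpr hy1)] using
    (convex_Icc y 1).norm_image_sub_le_of_norm_hasDerivWithin_le hderiv hbound
      (left_mem_Icc.mpr hy1) (right_mem_Icc.mpr hy1)

-- The bounds `2` and `‖u‖ * x` are both at most twice their harmonic mean.
lemma norm_one_sub_one_sub_cpow_le {u : ℂ} (hu : 1 ≤ u.re) {x : ℝ} (hx0 : 0 ≤ x) (hx1 : x < 1) :
    ‖1 - ((1 - x : ℝ) : ℂ) ^ u‖ ≤ 4 * (‖u‖ * x) / (2 + ‖u‖ * x) := by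
  have hlin : ‖1 - ((1 - x : ℝ) : ℂ) ^ u‖ ≤ ‖u‖ * x := by
    simpa using norm_one_sub_cpow_le hu (sub_pos.mpr hx1) (by linarith)
  have hpow : ‖((1 - x : ℝ) : ℂ) ^ u‖ ≤ 1 := by
    rw [norm_cpow_eq_rpow_re_of_pos (sub_pos.mpr hx1)]
    exact Real.rpow_le_one (by linarith) (by linarith) (by linarith)
  have htwo : ‖1 - ((1 - x : ℝ) : ℂ) ^ u‖ ≤ 2 := by
    refine (norm_sub_le _ _).trans ?_
    rw [norm_one]
    linarith
  have hux : 0 ≤ ‖u‖ * x := by positivity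
  rw [le_div_iff₀ (by positivity)]
  nlinarith

lemma continuousOn_div_two_add_mul {m : ℝ} (hm : 0 ≤ m) :
    ContinuousOn (fun x => 4 * m / (2 + m * x)) (uIcc 0 1) := by
  refine .div (by fun_prop) (by fun_prop) fun x hx => ?_
  have : 0 ≤ x := (uIcc_of_le (zero_le_one' ℝ) ▸ hx).1
  positivity

lemma integral_div_two_add_mul {m : ℝ} (hm : 0 ≤ m) :
    ∫ x in (0 : ℝ)..1, 4 * m / (2 + m * x) = 4 * Real.log (2 + m) - 4 * Real.log 2 := by
  rw [intervalIntegral.integral_eq_sub_of_hasDerivAt (f := fun x => 4 * Real.log (2 + m * x)) ?_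
    (continuousOn_div_two_add_mul hm).intervalIntegrable]
  · simp
  · intro x hx
    have : 0 ≤ x := (uIcc_of_le (zero_le_one' ℝ) ▸ hx).1
    have hlin : HasDerivAt (fun x : ℝ => 2 + m * x) m x := by
      simpa using ((hasDerivAt_id x).const_mul m).const_add 2
    simpa [mul_div_assoc] using (hlin.log (by positivity)).const_mul 4

lemma norm_betaIntegrand_one_sub_le {z : ℂ} (hz : 2 ≤ z.re) {v : ℝ} (hv : 0 < v) {x : ℝ}
    (hx0 : 0 < x) (hx1 : x < 1) :
    ‖(x : ℂ) ^ ((v : ℂ) - 1) * (1 - (x : ℂ)) ^ ((1 : ℂ) - 1) -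
        (x : ℂ) ^ ((v : ℂ) - 1) * (1 - (x : ℂ)) ^ (z - 1)‖ ≤
      4 * ‖z - 1‖ / (2 + ‖z - 1‖ * x) := by
  have hfactor : (x : ℂ) ^ ((v : ℂ) - 1) * (1 - (x : ℂ)) ^ ((1 : ℂ) - 1) -
      (x : ℂ) ^ ((v : ℂ) - 1) * (1 - (x : ℂ)) ^ (z - 1) =
        (x : ℂ) ^ ((v : ℂ) - 1) * (1 - ((1 - x : ℝ) : ℂ) ^ (z - 1)) := by
    rw [sub_self, cpow_zero]
    push_cast
    ring
  have hpow : x ^ ((v : ℂ) - 1).re ≤ x⁻¹ := by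
    rw [← Real.rpow_neg_one]
    exact Real.rpow_le_rpow_of_exponent_ge hx0 hx1.le (by simpa using hv.le)
  have hre : 1 ≤ (z - 1).re := by
    rw [sub_re, one_re]
    linarith
  rw [hfactor, norm_mul, norm_cpow_eq_rpow_re_of_pos hx0]
  calc x ^ ((v : ℂ) - 1).re * ‖1 - ((1 - x : ℝ) : ℂ) ^ (z - 1)‖
      ≤ x⁻¹ * (4 * (‖z - 1‖ * x) / (2 + ‖z - 1‖ * x)) := by
        gcongr
        exact norm_one_sub_one_sub_cpow_le hre hx0.le hx1
    _ = 4 * ‖z - 1‖ / (2 + ‖z - 1‖ * x) := by field_simp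

lemma norm_one_div_sub_betaIntegral_le {z : ℂ} (hz : 2 ≤ z.re) {v : ℝ} (hv : 0 < v) :
    ‖1 / (v : ℂ) - betaIntegral v z‖ ≤ 4 * Real.log (2 + ‖z - 1‖) := by
  have hv' : 0 < (v : ℂ).re := by simpa
  rw [← betaIntegral_eval_one_right hv', betaIntegral, betaIntegral,
    ← intervalIntegral.integral_sub (betaIntegral_convergent hv' (by simp))
      (betaIntegral_convergent hv' (by linarith))]
  calc _ ≤ ∫ x in (0 : ℝ)..1, 4 * ‖z - 1‖ / (2 + ‖z - 1‖ * x) := by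
        refine intervalIntegral.norm_integral_le_of_norm_le zero_le_one ?_
          (continuousOn_div_two_add_mul (norm_nonneg _)).intervalIntegrable
        filter_upwards [Measure.ae_ne volume 1] with x hx hmem
        exact norm_betaIntegrand_one_sub_le hz hv hmem.1 (hmem.2.lt_of_ne hx)
    _ = 4 * Real.log (2 + ‖z - 1‖) - 4 * Real.log 2 := integral_div_two_add_mul (norm_nonneg _)
    _ ≤ 4 * Real.log (2 + ‖z - 1‖) := by
        have := Real.log_nonneg one_le_two
        linarith

lemma hasDerivAt_Gamma_one_add_mul_Gamma_div {z : ℂ} (hz : 0 < z.re) :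
    HasDerivAt (fun v => Gamma (1 + v) * Gamma z / Gamma (z + v))
      (-(digamma z + Real.eulerMascheroniConstant)) 0 := by
  have hGamma : Gamma z ≠ 0 := Gamma_ne_zero_of_re_pos hz
  have hshift (w : ℂ) (hw : 0 < w.re) :
      HasDerivAt (fun v => Gamma (w + v)) (deriv Gamma w) 0 := by
    refine HasDerivAt.comp_const_add w 0 ?_
    rw [add_zero]
    exact hasDerivAt_Gamma_of_re_pos hw
  convert! ((hshift 1 (by simp)).mul_const (Gamma z)).div (hshift z hz) (by rwa [add_zero]) using 1
  rw [hasDerivAt_Gamma_one.deriv, digamma_def, logDeriv_apply, add_zero, add_zero, Gamma_one]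
  field_simp
  ring

lemma Gamma_one_add_mul_Gamma_div_sub_one {z : ℂ} (hz : 0 < z.re) {v : ℝ} (hv : 0 < v) :
    Gamma (1 + v) * Gamma z / Gamma (z + v) - 1 = -(v * (1 / (v : ℂ) - betaIntegral v z)) := by
  have hv' : 0 < (v : ℂ).re := by simpa
  have hv0 : (v : ℂ) ≠ 0 := mod_cast hv.ne'
  have hGamma : Gamma (z + v) ≠ 0 := Gamma_ne_zero_of_re_pos (by simp; linarith)
  rw [add_comm 1 (v : ℂ), Gamma_add_one _ hv0, mul_assoc, Gamma_mul_Gamma_eq_betaIntegral hv' hz,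
    add_comm (v : ℂ) z]
  field_simp
  ring

-- `-(ψ z + γ)` is the derivative at `v = 0⁺` of `Γ(1 + v) Γ(z) / Γ(z + v) = v B(v, z)`.
lemma norm_digamma_add_eulerMascheroniConstant_le {z : ℂ} (hz : 2 ≤ z.re) :
    ‖digamma z + Real.eulerMascheroniConstant‖ ≤ 4 * Real.log (2 + ‖z - 1‖) := by
  have hz0 : 0 < z.re := by linarith
  have hslope :=
    ((hasDerivAt_Gamma_one_add_mul_Gamma_div hz0).comp_ofReal (z := 0)).tendsto_slope_zero_right
  rw [← norm_neg]
  refine le_of_tendsto hslope.norm ?_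
  filter_upwards [self_mem_nhdsWithin] with v hv
  have hv0 : (v : ℂ) ≠ 0 := mod_cast (mem_Ioi.mp hv).ne'
  have hquot : v⁻¹ • (Gamma (1 + v) * Gamma z / Gamma (z + v) - 1) =
      -(1 / (v : ℂ) - betaIntegral v z) := by
    rw [Gamma_one_add_mul_Gamma_div_sub_one hz0 hv, real_smul, ofReal_inv, mul_neg,
      inv_mul_cancel_left₀ hv0]
  simp only [zero_add, ofReal_zero, add_zero, Gamma_one, one_mul,
    div_self (Gamma_ne_zero_of_re_pos hz0), hquot, norm_neg]
  exact norm_one_div_sub_betaIntegral_le hz hv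

lemma norm_digamma_le {z : ℂ} (hz : 1 / 4 ≤ z.re) : ‖digamma z‖ ≤ 16 * Real.log (2 + ‖z‖) := by
  set γ := Real.eulerMascheroniConstant
  have hnorm : 1 / 4 ≤ ‖z‖ := hz.trans (re_le_norm z)
  have hnorm_add : 1 ≤ ‖z + 1‖ := le_trans (by simp; linarith) (re_le_norm (z + 1))
  have hinv : ‖z⁻¹‖ ≤ 4 := by
    rw [norm_inv, inv_le_comm₀ (by linarith) (by norm_num)]
    linarith
  have hinv_add : ‖(z + 1)⁻¹‖ ≤ 1 := by
    rw [norm_inv]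
    exact inv_le_one_of_one_le₀ hnorm_add
  have hγ : ‖(γ : ℂ)‖ ≤ 2 / 3 := by
    rw [norm_real, Real.norm_of_nonneg (by linarith [Real.one_half_lt_eulerMascheroniConstant])]
    exact Real.eulerMascheroniConstant_lt_two_thirds.le
  have hrec : digamma z = digamma (z + 1 + 1) + γ - γ - (z + 1)⁻¹ - z⁻¹ := by
    rw [digamma_apply_add_one (z + 1) (ne_neg_natCast_of_re_pos (by simp; linarith)),
      digamma_apply_add_one z (ne_neg_natCast_of_re_pos (by linarith))]
    ring
  have hlog : Real.log (2 + ‖z + 1 + 1 - 1‖) ≤ Real.log (2 + ‖z‖) + 1 / 2 := calc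
    _ ≤ Real.log ((2 + ‖z‖) * (3 / 2)) := by
      have : ‖z + 1‖ ≤ ‖z‖ + 1 := by simpa using norm_add_le z 1
      rw [add_sub_cancel_right]
      exact Real.log_le_log (by positivity) (by nlinarith)
    _ ≤ Real.log (2 + ‖z‖) + 1 / 2 := by
      rw [Real.log_mul (by positivity) (by norm_num)]
      linarith [Real.log_le_sub_one_of_pos (show (0 : ℝ) < 3 / 2 by norm_num)]
  have hlog_two : Real.log 2 ≤ Real.log (2 + ‖z‖) := Real.log_le_log (by norm_num) (by linarith)
  have := norm_digamma_add_eulerMascheroniConstant_le (z := z + 1 + 1) (by simp; linarith)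
  calc ‖digamma z‖ ≤ ‖digamma (z + 1 + 1) + γ‖ + ‖(γ : ℂ)‖ + ‖(z + 1)⁻¹‖ + ‖z⁻¹‖ := by
        rw [hrec]
        exact (norm_sub_le _ _).trans <| add_le_add_left
          ((norm_sub_le _ _).trans <| add_le_add_left (norm_sub_le _ _) _) _
    _ ≤ 16 * Real.log (2 + ‖z‖) := by linarith [Real.log_two_gt_d9]

lemma exists_norm_Gamma_le_mul_norm_Gamma_add {h σ : ℝ} (hh : 0 < h) (hσ : 0 < σ) :
    ∃ C : ℝ, ∀ z : ℂ, σ ≤ z.re → ‖Gamma z‖ ≤ C * ‖Gamma (z + h)‖ := by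
  have hh' : 0 < (h : ℂ).re := by simpa
  have hconv := betaIntegral_convergent (u := σ) (v := h) (by simpa) hh'
  have hΓ : Gamma h ≠ 0 := Gamma_ne_zero_of_re_pos hh'
  set B := ∫ x in (0 : ℝ)..1, ‖(x : ℂ) ^ ((σ : ℂ) - 1) * (1 - (x : ℂ)) ^ ((h : ℂ) - 1)‖
  have hbeta (z : ℂ) (hz : σ ≤ z.re) : ‖betaIntegral z h‖ ≤ B := by
    refine intervalIntegral.norm_integral_le_of_norm_le zero_le_one (.of_forall fun x hx => ?_)
      hconv.norm
    rw [norm_mul, norm_mul, norm_cpow_eq_rpow_re_of_pos hx.1, norm_cpow_eq_rpow_re_of_pos hx.1]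
    exact mul_le_mul_of_nonneg_right
      (Real.rpow_le_rpow_of_exponent_ge hx.1 hx.2 (by simpa)) (by positivity)
  refine ⟨B / ‖Gamma h‖, fun z hz => ?_⟩
  rw [div_mul_eq_mul_div, le_div_iff₀ (norm_pos_iff.mpr hΓ), ← norm_mul,
    Gamma_mul_Gamma_eq_betaIntegral (by linarith) hh', norm_mul, mul_comm]
  gcongr
  exact hbeta z hz

lemma isLittleO_rpow_rpow_atTop {r r' : ℝ} (hr : r < r') :
    (fun x : ℝ => x ^ r) =o[atTop] fun x => x ^ r' := by
  refine isLittleO_of_tendsto' ?_ ((tendsto_rpow_neg_atTop (sub_pos.mpr hr)).congr' ?_)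
  · filter_upwards [eventually_gt_atTop 0] with x hx hx0
    exact absurd hx0 (by positivity)
  · filter_upwards [eventually_gt_atTop 0] with x hx
    rw [neg_sub, Real.rpow_sub hx]

lemma GrowthOn.eventually_norm_le_of_norm_sub_le {f : ℂ → ℂ} {S : Set ℂ} {r r' : ℝ}
    (hf : GrowthOn f S r) (hr : r < r') (hr' : 0 ≤ r') {c : ℝ} (hc : 0 < c) (d : ℝ) :
    ∀ᶠ s in cobounded ℂ, ∀ z ∈ S, ‖z - s‖ ≤ d → ‖f z‖ ≤ c * ‖s‖ ^ r' := by
  have hlittle : f =o[cobounded ℂ ⊓ 𝓟 S] fun z => ‖z‖ ^ r' :=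
    hf.trans_isLittleO <| (isLittleO_rpow_rpow_atTop hr).comp_tendsto (tendsto_norm_atTop S)
  have hsmall := hlittle.bound (c := c / 2 ^ r') (by positivity)
  rw [eventually_inf_principal] at hsmall
  obtain ⟨R, -, hR⟩ := (hasBasis_cobounded_norm (E := ℂ)).eventually_iff.mp hsmall
  filter_upwards [tendsto_norm_cobounded_atTop.eventually_ge_atTop (R + d),
    tendsto_norm_cobounded_atTop.eventually_ge_atTop d] with s hsR hsd z hzS hzs
  have hlower : R ≤ ‖z‖ := by linarith [norm_sub_norm_le s z, norm_sub_rev s z]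
  have hupper : ‖z‖ ≤ 2 * ‖s‖ := by linarith [norm_sub_norm_le z s]
  calc ‖f z‖ ≤ c / 2 ^ r' * ‖‖z‖ ^ r'‖ := hR hlower hzS
    _ ≤ c / 2 ^ r' * (2 * ‖s‖) ^ r' := by
      rw [Real.norm_of_nonneg (by positivity)]
      gcongr
    _ = c * ‖s‖ ^ r' := by
      rw [Real.mul_rpow zero_le_two (norm_nonneg s)]
      field_simp

section BorelCaratheodory

variable {F : ℂ → ℂ} {c : ℂ} {R : ℝ}

lemma exists_log_on_ball (hR : 0 < R) (hF : DifferentiableOn ℂ F (Metric.ball c R))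
    (hne : ∀ z ∈ Metric.ball c R, F z ≠ 0) :
    ∃ g : ℂ → ℂ, g c = 0 ∧ (∀ z ∈ Metric.ball c R, HasDerivAt g (logDeriv F z) z) ∧
      ∀ z ∈ Metric.ball c R, F z = F c * cexp (g z) := by
  have hlogDeriv : DifferentiableOn ℂ (logDeriv F) (Metric.ball c R) :=
    (hF.deriv Metric.isOpen_ball).div hF hne
  obtain ⟨g, hgc, hg⟩ := hlogDeriv.isExactOn_ball.with_val_at c 0
  refine ⟨g, hgc, hg, fun z hz => ?_⟩
  have hderiv (w : ℂ) (hw : w ∈ Metric.ball c R) :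
      HasDerivAt (fun w => F w * cexp (-g w)) 0 w := by
    have hFw := (hF.differentiableAt (Metric.isOpen_ball.mem_nhds hw)).hasDerivAt
    convert! hFw.mul (hg w hw).neg.cexp using 1
    rw [logDeriv_apply]
    have := hne w hw
    field_simp
    ring
  have hconst := Metric.isOpen_ball.is_const_of_deriv_eq_zero (convex_ball c R).isPreconnected
    (fun w hw => (hderiv w hw).differentiableAt.differentiableWithinAt)
    (fun w hw => (hderiv w hw).deriv) hz (Metric.mem_ball_self hR)
  simp only [hgc, neg_zero, Complex.exp_zero, mul_one] at hconst
  rw [← hconst, mul_assoc, ← Complex.exp_add, neg_add_cancel, Complex.exp_zero, mul_one]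

lemma norm_le_of_re_le_on_ball {g : ℂ → ℂ} {B : ℝ} (hB : 0 < B)
    (hg : DifferentiableOn ℂ g (Metric.ball c R)) (hgc : g c = 0)
    (hre : ∀ z ∈ Metric.ball c R, (g z).re ≤ B) {r : ℝ} (hr : r < R) {z : ℂ} (hz : ‖z - c‖ ≤ r) :
    ‖g z‖ ≤ 2 * B * r / (R - r) := by
  have hr0 : 0 ≤ r := (norm_nonneg _).trans hz
  have hmaps : MapsTo (c + ·) (Metric.ball 0 R) (Metric.ball c R) := fun u hu => by
    simpa [mem_ball_iff_norm] using hu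
  have := borelCaratheodory_zero (f := fun u => g (c + u)) (z := z - c) hB
    (hg.comp (by fun_prop) hmaps) (fun u hu => hre _ (hmaps hu)) (by linarith)
    (by simpa using hz.trans_lt hr) (by simpa using hgc)
  rw [add_sub_cancel] at this
  exact this.trans (by gcongr)

lemma exists_log_norm_le {B : ℝ} (hR : 0 < R) (hB : 0 < B)
    (hF : DifferentiableOn ℂ F (Metric.ball c R)) (hne : ∀ z ∈ Metric.ball c R, F z ≠ 0)
    (hbound : ∀ z ∈ Metric.ball c R, ‖F z‖ ≤ Real.exp B * ‖F c‖) :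
    ∃ g : ℂ → ℂ, (∀ z ∈ Metric.ball c R, HasDerivAt g (logDeriv F z) z) ∧
      (∀ z ∈ Metric.ball c R, F z = F c * cexp (g z)) ∧
      ∀ r < R, ∀ z, ‖z - c‖ ≤ r → ‖g z‖ ≤ 2 * B * r / (R - r) := by
  obtain ⟨g, hgc, hg, hFg⟩ := exists_log_on_ball hR hF hne
  have hFc : 0 < ‖F c‖ := norm_pos_iff.mpr (hne c (Metric.mem_ball_self hR))
  refine ⟨g, hg, hFg, fun r hr z hz => norm_le_of_re_le_on_ball hB
    (fun w hw => (hg w hw).differentiableAt.differentiableWithinAt) hgc (fun w hw => ?_) hr hz⟩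
  have := hbound w hw
  rw [hFg w hw, norm_mul, norm_exp, mul_comm] at this
  exact Real.exp_le_exp.mp (le_of_mul_le_mul_right this hFc)

lemma norm_logDeriv_le_of_norm_le {B r : ℝ} (hr0 : 0 < r) (hr : r < R) (hB : 0 < B)
    (hF : DifferentiableOn ℂ F (Metric.ball c R)) (hne : ∀ z ∈ Metric.ball c R, F z ≠ 0)
    (hbound : ∀ z ∈ Metric.ball c R, ‖F z‖ ≤ Real.exp B * ‖F c‖) {z : ℂ} (hz : ‖z - c‖ ≤ r) :
    ‖logDeriv F z‖ ≤ 4 * (r + R) / (R - r) ^ 2 * B := by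
  obtain ⟨g, hg, -, hgB⟩ := exists_log_norm_le (hr0.trans hr) hB hF hne hbound
  have hδ : 0 < (R - r) / 2 := by linarith
  have hclose {w : ℂ} (hw : w ∈ Metric.closedBall z ((R - r) / 2)) : ‖w - c‖ ≤ (r + R) / 2 := by
    rw [mem_closedBall_iff_norm] at hw
    linarith [norm_sub_le_norm_sub_add_norm_sub w z c]
  have hball {w : ℂ} (hw : ‖w - c‖ ≤ (r + R) / 2) : w ∈ Metric.ball c R := by
    rw [mem_ball_iff_norm]
    linarith
  have hdiff : DiffContOnCl ℂ g (Metric.ball z ((R - r) / 2)) := by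
    refine DifferentiableOn.diffContOnCl fun w hw => ?_
    rw [closure_ball _ hδ.ne'] at hw
    exact (hg w (hball (hclose hw))).differentiableAt.differentiableWithinAt
  rw [← (hg z (hball (by linarith))).deriv]
  refine (norm_deriv_le_of_forall_mem_sphere_norm_le hδ hdiff fun w hw =>
    hgB _ (by linarith) w (hclose (Metric.sphere_subset_closedBall hw))).trans_eq ?_
  rw [show R - (r + R) / 2 = (R - r) / 2 by ring]
  field_simp
  ring

lemma norm_center_le_of_norm_le {B r : ℝ} (hR : 0 < R) (hr : r < R) (hB : 0 < B)
    (hF : DifferentiableOn ℂ F (Metric.ball c R)) (hne : ∀ z ∈ Metric.ball c R, F z ≠ 0)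
    (hbound : ∀ z ∈ Metric.ball c R, ‖F z‖ ≤ Real.exp B * ‖F c‖) {z : ℂ} (hz : ‖z - c‖ ≤ r) :
    ‖F c‖ ≤ Real.exp (2 * r / (R - r) * B) * ‖F z‖ := by
  obtain ⟨g, -, hFg, hgB⟩ := exists_log_norm_le hR hB hF hne hbound
  have hgz := hgB r hr z hz
  rw [hFg z (mem_ball_iff_norm.mpr (hz.trans_lt hr)), norm_mul, norm_exp]
  have hone : 1 ≤ Real.exp (2 * r / (R - r) * B) * Real.exp (g z).re := by
    rw [← Real.exp_add]
    refine Real.one_le_exp ?_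
    have := (neg_le_abs _).trans (abs_re_le_norm (g z))
    linarith [show 2 * r / (R - r) * B = 2 * B * r / (R - r) by ring]
  nlinarith [norm_nonneg (F c)]

end BorelCaratheodory

section HalfPlane

variable {F : ℂ → ℂ} {σ₀ σ₁ A c₀ ε : ℝ}

lemma eventually_forall_ball_norm_le (hA : 0 ≤ A) (hc₀ : 0 < c₀)
    (hgrowth : GrowthOn F {s | σ₀ < s.re} A) (hlower : ∀ s : ℂ, σ₁ ≤ s.re → c₀ ≤ ‖F s‖)
    (hε : 0 < ε) :
    ∀ᶠ s : ℂ in cobounded ℂ ⊓ 𝓟 {s | σ₀ + ε ≤ s.re},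
      ∀ z ∈ Metric.ball (s + (σ₁ - σ₀ : ℝ)) (σ₁ - σ₀ + ε / 2), σ₀ < z.re ∧
        ‖F z‖ ≤ Real.exp ((A + 1) * Real.log ‖s‖) * ‖F (s + (σ₁ - σ₀ : ℝ))‖ := by
  rw [eventually_inf_principal]
  filter_upwards [hgrowth.eventually_norm_le_of_norm_sub_le (r' := A + 1) (by linarith)
    (by linarith) hc₀ (‖((σ₁ - σ₀ : ℝ) : ℂ)‖ + (σ₁ - σ₀ + ε / 2)),
    tendsto_norm_cobounded_atTop.eventually_gt_atTop 0] with s hs hs0 hre z hz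
  rw [mem_ball_iff_norm] at hz
  have hzre : σ₀ < z.re := by
    have := (neg_le_abs _).trans (abs_re_le_norm (z - (s + (σ₁ - σ₀ : ℝ))))
    simp only [sub_re, add_re, ofReal_re] at this
    linarith
  have hdist : ‖z - s‖ ≤ ‖((σ₁ - σ₀ : ℝ) : ℂ)‖ + (σ₁ - σ₀ + ε / 2) := by
    have := norm_add_le (z - (s + (σ₁ - σ₀ : ℝ))) ((σ₁ - σ₀ : ℝ) : ℂ)
    rw [sub_add_eq_sub_sub, sub_add_cancel] at this
    linarith [sub_add_eq_sub_sub z s ((σ₁ - σ₀ : ℝ) : ℂ) ▸ hz]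
  have hcenter : c₀ ≤ ‖F (s + (σ₁ - σ₀ : ℝ))‖ :=
    hlower _ (by rw [add_re, ofReal_re]; linarith)
  refine ⟨hzre, (hs z hzre hdist).trans ?_⟩
  rw [mul_comm (A + 1), Real.exp_mul, Real.exp_log hs0, mul_comm]
  gcongr

variable (hA : 0 ≤ A) (hσ : σ₀ < σ₁) (hc₀ : 0 < c₀) (hF : DifferentiableOn ℂ F {s | σ₀ < s.re})
  (hne : ∀ s : ℂ, σ₀ < s.re → F s ≠ 0) (hgrowth : GrowthOn F {s | σ₀ < s.re} A)
  (hlower : ∀ s : ℂ, σ₁ ≤ s.re → c₀ ≤ ‖F s‖) (hε : 0 < ε)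
include hA hσ hc₀ hF hne hgrowth hlower hε

lemma growthOn_logDeriv {r : ℝ} (hr : 0 < r) :
    GrowthOn (logDeriv F) {s | σ₀ + ε ≤ s.re} r := by
  have hlog : (fun s : ℂ => (A + 1) * Real.log ‖s‖) =O[cobounded ℂ ⊓ 𝓟 {s | σ₀ + ε ≤ s.re}]
      fun s => ‖s‖ ^ r :=
    ((isLittleO_log_rpow_atTop hr).comp_tendsto (GrowthOn.tendsto_norm_atTop _)).isBigO
      |>.const_mul_left _
  refine IsBigO.trans (.of_bound
    (4 * (σ₁ - σ₀ + (σ₁ - σ₀ + ε / 2)) / (σ₁ - σ₀ + ε / 2 - (σ₁ - σ₀)) ^ 2) ?_) hlog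
  filter_upwards [eventually_forall_ball_norm_le hA hc₀ hgrowth hlower hε,
    (GrowthOn.tendsto_norm_atTop _).eventually_gt_atTop 1] with s hs hs1
  have hB : 0 < (A + 1) * Real.log ‖s‖ := mul_pos (by linarith) (Real.log_pos hs1)
  rw [Real.norm_of_nonneg hB.le]
  refine norm_logDeriv_le_of_norm_le (by linarith) (by linarith) hB
    (hF.mono fun z hz => (hs z hz).1) (fun z hz => hne z (hs z hz).1) (fun z hz => (hs z hz).2) ?_
  rw [sub_add_cancel_left, norm_neg, norm_real, Real.norm_of_nonneg (by linarith)]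

lemma exists_growthOn_inv : ∃ A', 0 ≤ A' ∧ GrowthOn F⁻¹ {s | σ₀ + ε ≤ s.re} A' := by
  set κ := 2 * (σ₁ - σ₀) / (σ₁ - σ₀ + ε / 2 - (σ₁ - σ₀))
  have hκ : 0 ≤ κ := div_nonneg (by linarith) (by linarith)
  refine ⟨κ * (A + 1), by positivity, .of_bound c₀⁻¹ ?_⟩
  filter_upwards [eventually_forall_ball_norm_le hA hc₀ hgrowth hlower hε,
    (GrowthOn.tendsto_norm_atTop _).eventually_gt_atTop 1,
    mem_inf_of_right (mem_principal_self _)] with s hs hs1 hre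
  have hcenter : c₀ ≤ ‖F (s + (σ₁ - σ₀ : ℝ))‖ :=
    hlower _ (by rw [add_re, ofReal_re]; linarith)
  have hFs : 0 < ‖F s‖ := norm_pos_iff.mpr (hne s (by linarith))
  have := norm_center_le_of_norm_le (r := σ₁ - σ₀) (z := s) (by linarith) (by linarith)
    (mul_pos (by linarith) (Real.log_pos hs1))
    (hF.mono fun z hz => (hs z hz).1) (fun z hz => hne z (hs z hz).1) (fun z hz => (hs z hz).2)
    (by rw [sub_add_cancel_left, norm_neg, norm_real, Real.norm_of_nonneg (by linarith)])
  rw [← mul_assoc, mul_comm _ (Real.log ‖s‖), Real.exp_mul, Real.exp_log (by linarith)] at this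
  rw [Pi.inv_apply, norm_inv, Real.norm_of_nonneg (by positivity), inv_mul_eq_div,
    inv_le_comm₀ hFs (by positivity), inv_div, div_le_iff₀ (by positivity), mul_comm]
  exact hcenter.trans this

end HalfPlane

/-! ### Continuation and growth of `L`-functions -/

/-- The Mellin-type integral `∫₁^∞ E(x) x^(-s-1) dx` of the error term `E` of a summatory function:
it carries the analytic continuation of the L-series past `Re s = 1`. -/
def mellinTail (E : ℝ → ℂ) (s : ℂ) : ℂ :=
  ∫ x in Set.Ioi (1 : ℝ), E x * (x : ℂ) ^ (-(s + 1))

lemma mellinTail_eq_mellin (E : ℝ → ℂ) (s : ℂ) :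
    mellinTail E s = mellin ((Set.Ioi 1).indicator E) (-s) := by
  have hsub : Set.Ioi (1 : ℝ) ⊆ Set.Ioi 0 := Ioi_subset_Ioi zero_le_one
  have hind : (fun x : ℝ => (x : ℂ) ^ (-s - 1) • (Set.Ioi 1).indicator E x) =
      (Set.Ioi 1).indicator fun x => E x * (x : ℂ) ^ (-(s + 1)) := by
    ext x
    by_cases hx : x ∈ Set.Ioi 1 <;> simp [hx, neg_add', -neg_add_rev, mul_comm (E x)]
  rw [mellin, hind, setIntegral_indicator measurableSet_Ioi, inter_eq_self_of_subset_right hsub,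
    mellinTail]

section MellinTail

variable {E : ℝ → ℂ} {B : ℝ} {s : ℂ}

lemma differentiableAt_mellinTail (hE : Measurable E) (hB : ∀ x, 1 < x → ‖E x‖ ≤ B)
    (hs : 0 < s.re) : DifferentiableAt ℂ (mellinTail E) s := by
  have hbound (x : ℝ) : ‖(Set.Ioi 1).indicator E x‖ ≤ |B| := by
    by_cases hx : x ∈ Set.Ioi 1
    · simpa [hx] using (hB x hx).trans (le_abs_self B)
    · simp [hx]
  have hmellin : DifferentiableAt ℂ (mellin ((Set.Ioi 1).indicator E)) (-s) := by
    refine mellin_differentiableAt_of_isBigO_rpow (a := 0) (b := -s.re - 1) ?_ ?_ (by simpa) ?_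
      (by simp)
    · exact ((locallyIntegrable_const |B|).mono
        (hE.indicator measurableSet_Ioi).aestronglyMeasurable
        (.of_forall fun x => by simpa using hbound x)).locallyIntegrableOn _
    · exact .of_bound |B| (.of_forall fun x => by simpa using hbound x)
    · refine IsBigO.of_bound 1 ?_
      filter_upwards [Ioo_mem_nhdsGT zero_lt_one] with x hx
      simp [hx.2.le, Set.indicator_of_notMem]
  rw [funext (mellinTail_eq_mellin E)]
  exact DifferentiableAt.comp (g := mellin ((Set.Ioi 1).indicator E)) s hmellin
    differentiableAt_id.neg

lemma norm_mellinTail_le (hB : ∀ x, 1 < x → ‖E x‖ ≤ B) (hs : 0 < s.re) :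
    ‖mellinTail E s‖ ≤ B / s.re := calc
  _ ≤ ∫ x in Set.Ioi (1 : ℝ), B * x ^ (-s.re - 1) := by
    refine norm_integral_le_of_norm_le
      ((integrableOn_Ioi_rpow_of_lt (by linarith) one_pos).const_mul B) ?_
    filter_upwards [ae_restrict_mem measurableSet_Ioi] with x hx
    have hx0 : 0 < x := one_pos.trans hx
    rw [norm_mul, norm_cpow_eq_rpow_re_of_pos hx0, neg_add', sub_re, neg_re, one_re]
    exact mul_le_mul_of_nonneg_right (hB x hx) (by positivity)
  _ = B / s.re := by
    rw [integral_const_mul, integral_Ioi_rpow_of_lt (by linarith) one_pos]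
    simp [div_eq_mul_inv]

end MellinTail

section SummatoryFunction

/-- The error `∑_{n ≤ x} f n - ρ x` in approximating a summatory function by its linear main
term. -/
def sumError (f : ℕ → ℂ) (ρ : ℂ) (x : ℝ) : ℂ := ∑ k ∈ Finset.Icc 1 ⌊x⌋₊, f k - ρ * x

variable {f : ℕ → ℂ} {ρ : ℂ} {B : ℝ} {s : ℂ}

lemma measurable_sumError : Measurable (sumError f ρ) :=
  ((measurable_from_nat (f := fun n => ∑ k ∈ Finset.Icc 1 n, f k)).comp Nat.measurable_floor).sub
    (measurable_ofReal.const_mul ρ)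

lemma sum_isBigO_of_norm_sumError_le (hB : ∀ x, 1 ≤ x → ‖sumError f ρ x‖ ≤ B) :
    (fun n => ∑ k ∈ Finset.Icc 1 n, f k) =O[atTop] fun n : ℕ => (n : ℝ) ^ (1 : ℝ) := by
  refine .of_bound (B + ‖ρ‖) ?_
  filter_upwards [eventually_ge_atTop 1] with n hn
  have hn1 : (1 : ℝ) ≤ n := mod_cast hn
  have herror := hB n hn1
  have hB0 := (norm_nonneg _).trans herror
  rw [sumError, Nat.floor_natCast, ofReal_natCast] at herror
  have := norm_le_norm_sub_add (∑ k ∈ Finset.Icc 1 n, f k) (ρ * n)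
  rw [norm_mul, Complex.norm_natCast] at this
  rw [Real.rpow_one, Real.norm_natCast]
  nlinarith

lemma sub_one_mul_LSeries_eq (hB : ∀ x, 1 ≤ x → ‖sumError f ρ x‖ ≤ B)
    (hsum : LSeriesSummable f s) (hs : 1 < s.re) :
    (s - 1) * LSeries f s = ρ * s + s * (s - 1) * mellinTail (sumError f ρ) s := by
  have hs1 : s - 1 ≠ 0 := sub_ne_zero.mpr (by rintro rfl; simp at hs)
  have hmain : ∫ x in Set.Ioi (1 : ℝ), (x : ℂ) ^ (-s) = 1 / (s - 1) := by
    rw [integral_Ioi_cpow_of_lt (by simpa using hs) one_pos, ofReal_one, one_cpow, neg_add_eq_sub,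
      ← neg_sub s 1, neg_div_neg_eq]
  have hsplit : ∫ x in Set.Ioi (1 : ℝ), (∑ k ∈ Finset.Icc 1 ⌊x⌋₊, f k) * (x : ℂ) ^ (-(s + 1)) =
      ρ * (1 / (s - 1)) + mellinTail (sumError f ρ) s := by
    rw [← hmain, ← integral_const_mul, mellinTail, ← integral_add]
    · refine setIntegral_congr_fun measurableSet_Ioi fun x hx => ?_
      have hx0 : (x : ℂ) ≠ 0 := mod_cast (one_pos.trans hx).ne'
      simp only [sumError, neg_add', cpow_sub _ _ hx0, cpow_one]
      field_simp
      ring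
    · exact (integrableOn_Ioi_cpow_of_lt (by simpa using hs) one_pos).const_mul ρ
    · refine Integrable.bdd_mul (c := B)
        (integrableOn_Ioi_cpow_of_lt (by simp; linarith) one_pos)
        measurable_sumError.aestronglyMeasurable ?_
      filter_upwards [ae_restrict_mem measurableSet_Ioi] with x hx using hB x hx.le
  rw [LSeries_eq_mul_integral f zero_le_one hs hsum (sum_isBigO_of_norm_sumError_le hB), hsplit]
  field_simp

lemma growthOn_of_eq_sub_one_mul_LSeries {G : ℂ → ℂ} (hB : ∀ x, 1 ≤ x → ‖sumError f ρ x‖ ≤ B)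
    (hsum : ∀ s : ℂ, 1 < s.re → LSeriesSummable f s) (hG : DifferentiableOn ℂ G {s | 0 < s.re})
    (hGf : ∀ s : ℂ, 1 < s.re → G s = (s - 1) * LSeries f s) {σ : ℝ} (hσ : 0 < σ) :
    GrowthOn G {s | σ ≤ s.re} 2 := by
  have hB' (x : ℝ) (hx : 1 < x) := hB x hx.le
  have hopen : IsOpen {s : ℂ | 0 < s.re} := isOpen_lt continuous_const continuous_re
  have hdiff : DifferentiableOn ℂ (fun s => ρ * s + s * (s - 1) * mellinTail (sumError f ρ) s)
      {s | 0 < s.re} := fun s hs => by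
    have := differentiableAt_mellinTail measurable_sumError hB' hs
    exact DifferentiableAt.differentiableWithinAt (by fun_prop)
  have heq : EqOn G (fun s => ρ * s + s * (s - 1) * mellinTail (sumError f ρ) s)
      {s | 0 < s.re} := by
    refine (hG.analyticOnNhd hopen).eqOn_of_preconnected_of_eventuallyEq
      (hdiff.analyticOnNhd hopen) (convex_halfSpace_re_gt 0).isPreconnected (z₀ := 2) (by simp) ?_
    filter_upwards [(isOpen_lt continuous_const continuous_re).mem_nhds
      (show (2 : ℂ) ∈ {s | 1 < s.re} by simp)] with s hs
    rw [hGf s hs, sub_one_mul_LSeries_eq hB (hsum s hs) hs]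
  have hid := GrowthOn.id {s | σ ≤ s.re}
  have hsub := hid.sub_const zero_le_one 1
  have htail : GrowthOn (mellinTail (sumError f ρ)) {s | σ ≤ s.re} 0 := by
    refine .of_norm_le (C := B / σ) fun s hs => ?_
    have hB0 := (norm_nonneg _).trans (hB 1 le_rfl)
    exact (norm_mellinTail_le hB' (hσ.trans_le hs)).trans (by gcongr; exact hs)
  have hgrowth := (((GrowthOn.const ρ _).mul hid).mono_exponent (r' := 2) (by norm_num)).add <|
    ((hid.mul hsub).mul htail).mono_exponent (by norm_num)
  exact IsBigO.congr' hgrowth (mem_inf_of_right fun s hs => (heq (hσ.trans_le hs)).symm) .rfl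

end SummatoryFunction

lemma growthOn_LFunctionTrivChar₁ {σ : ℝ} (hσ : 0 < σ) :
    GrowthOn (LFunctionTrivChar₁ 1) {s | σ ≤ s.re} 2 := by
  refine growthOn_of_eq_sub_one_mul_LSeries (f := 1) (ρ := 1) (B := 1) (fun x hx => ?_)
    (fun s hs => LSeriesSummable_one_iff.mpr hs)
    (differentiable_LFunctionTrivChar₁ 1).differentiableOn (fun s hs => ?_) hσ
  · have hfract : sumError 1 1 x = -((Int.fract x : ℝ) : ℂ) := by
      have hfloor : ((⌊x⌋₊ : ℝ) : ℂ) = ⌊x⌋ := by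
        rw [natCast_floor_eq_intCast_floor (by linarith), ofReal_intCast]
      rw [ofReal_natCast] at hfloor
      rw [← Int.self_sub_floor]
      simp [sumError, hfloor, -Int.self_sub_floor]
    rw [hfract, norm_neg, norm_real, Real.norm_of_nonneg (Int.fract_nonneg _)]
    exact (Int.fract_lt_one x).le
  · have hs1 : s ≠ 1 := by rintro rfl; simp at hs
    rw [LFunctionTrivChar₁, Function.update_of_ne hs1, LFunctionTrivChar, LFunction_modOne_eq,
      LSeries_one_eq_riemannZeta hs]

section Character

variable {N : ℕ} [NeZero N] {χ : DirichletCharacter ℂ N}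

lemma sum_range_natCast_eq_sum (f : ZMod N → ℂ) : ∑ k ∈ Finset.range N, f k = ∑ a, f a := by
  refine Finset.sum_bij (fun k _ => (k : ZMod N)) (by simp) (fun a ha b hb hab => ?_)
    (fun b _ => ⟨b.val, by simpa using ZMod.val_lt b, by simp⟩) (by simp)
  rw [Finset.mem_range] at ha hb
  have hval := congrArg ZMod.val hab
  rwa [ZMod.val_natCast_of_lt ha, ZMod.val_natCast_of_lt hb] at hval

lemma norm_sum_range_le_of_ne_one (hχ : χ ≠ 1) (n : ℕ) :
    ‖∑ k ∈ Finset.range n, χ (k : ZMod N)‖ ≤ N := by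
  induction n using Nat.strong_induction_on with
  | _ n ih =>
    rcases lt_or_ge n N with hn | hn
    · calc _ ≤ ∑ _ ∈ Finset.range n, (1 : ℝ) := norm_sum_le_of_le _ fun _ _ => χ.norm_le_one _
        _ ≤ N := by simpa using hn.le
    · obtain ⟨m, rfl⟩ := Nat.exists_eq_add_of_le hn
      rw [Finset.sum_range_add, sum_range_natCast_eq_sum, MulChar.sum_eq_zero_of_ne_one hχ,
        zero_add]
      simpa using ih m (by have := NeZero.pos N; omega)

lemma norm_sumError_character_le (hχ : χ ≠ 1) (x : ℝ) :
    ‖sumError (fun n => χ (n : ZMod N)) 0 x‖ ≤ N + 1 := by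
  have hrange : sumError (fun n => χ (n : ZMod N)) 0 x =
      ∑ k ∈ Finset.range (⌊x⌋₊ + 1), χ (k : ZMod N) - χ 0 := by
    rw [sumError, zero_mul, sub_zero, Finset.range_eq_Ico, Finset.sum_eq_sum_Ico_succ_bot (by simp),
      Nat.cast_zero, add_sub_cancel_left, zero_add, Finset.Ico_add_one_right_eq_Icc]
  rw [hrange]
  exact (norm_sub_le _ _).trans
    (add_le_add (norm_sum_range_le_of_ne_one hχ _) (χ.norm_le_one _))

lemma growthOn_LFunction (hχ : χ ≠ 1) {σ : ℝ} (hσ : 0 < σ) :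
    GrowthOn (LFunction χ) {s | σ ≤ s.re} 1 := by
  have hmul : GrowthOn (fun s => (s - 1) * LFunction χ s) {s | σ ≤ s.re} 2 := by
    have := (differentiable_LFunction hχ).differentiableOn (s := {s | 0 < s.re})
    exact growthOn_of_eq_sub_one_mul_LSeries (fun x _ => norm_sumError_character_le hχ x)
      (fun s hs => LSeriesSummable_of_one_lt_re χ hs) (by fun_prop)
      (fun s hs => by rw [LFunction_eq_LSeries χ hs]) hσ
  have hdiv := (GrowthOn.inv_sub 1 _).mul hmul
  norm_num at hdiv
  refine IsBigO.congr' hdiv ?_ .rfl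
  filter_upwards [(GrowthOn.tendsto_norm_atTop _).eventually_gt_atTop 1] with s hs
  rw [inv_mul_cancel_left₀ (sub_ne_zero.mpr (by rintro rfl; simp at hs))]

end Character

lemma norm_LSeries_le {f : ℕ → ℂ} (hf : ∀ n, ‖f n‖ ≤ 1) {s : ℂ} (hs : 2 ≤ s.re) :
    ‖LSeries f s‖ ≤ Real.pi ^ 2 / 6 := by
  refine tsum_of_norm_bounded hasSum_zeta_two fun n => ?_
  rcases eq_or_ne n 0 with rfl | hn
  · simp
  have hn1 : (1 : ℝ) ≤ n := mod_cast Nat.one_le_iff_ne_zero.mpr hn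
  rw [LSeries.norm_term_eq, if_neg hn, ← Real.rpow_ofNat (n : ℝ) 2]
  gcongr
  exact hf n

-- The reciprocal of `L(s, χ)` is the Dirichlet series with coefficients `χ(n) μ(n)`.
lemma one_half_le_norm_LFunction {N : ℕ} [NeZero N] (χ : DirichletCharacter ℂ N) {s : ℂ}
    (hs : 2 ≤ s.re) : 1 / 2 ≤ ‖LFunction χ s‖ := by
  have hs1 : 1 < s.re := by linarith
  have hinv := norm_LSeries_le (f := (fun n : ℕ => χ (n : ZMod N)) * fun n : ℕ =>
    (ArithmeticFunction.moebius n : ℂ)) (fun n => ?_) hs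
  · have hmul := congrArg norm (LSeries.mul_mu_eq_one χ hs1)
    rw [norm_mul, norm_one, ← LFunction_eq_LSeries χ hs1] at hmul
    have hpi : Real.pi ^ 2 / 6 ≤ 2 := by nlinarith [Real.pi_lt_d2, Real.pi_pos]
    nlinarith [norm_nonneg (LFunction χ s)]
  · rw [Pi.mul_apply, norm_mul, norm_intCast]
    exact mul_le_one₀ (χ.norm_le_one _) (abs_nonneg _)
      (mod_cast ArithmeticFunction.abs_moebius_le_one)

/-! ### Completed `L`-functions with zeros on the critical line -/

-- Multiplying by `exp (-ε * z)` makes the polynomial growth on the real axis harmless.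
lemma GrowthOn.norm_le_of_norm_le_on_imaginary_axis {f : ℂ → ℂ} {C r : ℝ}
    (hgrowth : GrowthOn f {z | 0 < z.re} r) (hf : DiffContOnCl ℂ f {z | 0 < z.re})
    (hC : ∀ y : ℝ, ‖f (y * I)‖ ≤ C) {z : ℂ} (hz : 0 ≤ z.re) : ‖f z‖ ≤ C := by
  have hdiff (ε : ℝ) : Differentiable ℂ fun z => cexp (-ε * z) := by fun_prop
  have hdamped {ε : ℝ} (hε : 0 < ε) : ‖cexp (-ε * z) * f z‖ ≤ C := by
    refine PhragmenLindelof.right_half_plane_of_tendsto_zero_on_real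
      (f := fun z => cexp (-ε * z) * f z) (DiffContOnCl.smul (hdiff ε).diffContOnCl hf)
      ⟨1, one_lt_two, 1, ?_⟩ ?_ (fun y => by simpa [norm_exp] using hC y) hz
    · have hexp : GrowthOn (fun z => cexp (-ε * z)) {z | 0 < z.re} 0 :=
        .of_norm_le (C := 1) fun z hz => by
          simpa [norm_exp] using mul_nonneg hε.le (le_of_lt hz)
      refine (hexp.mul hgrowth).trans ?_
      simpa [Function.comp_def] using (isLittleO_rpow_exp_atTop (0 + r)).isBigO.comp_tendsto
        (GrowthOn.tendsto_norm_atTop {z | 0 < z.re})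
    · have hreal : Tendsto (fun x : ℝ => (x : ℂ)) atTop (cobounded ℂ ⊓ 𝓟 {z | 0 < z.re}) :=
        tendsto_inf.mpr ⟨RCLike.tendsto_ofReal_atTop_cobounded ℂ,
          tendsto_principal.mpr (eventually_gt_atTop 0)⟩
      have hdecay := tendsto_rpow_mul_exp_neg_mul_atTop_nhds_zero r ε hε
      have hexp : (fun x : ℝ => cexp (-ε * x)) =O[atTop] fun x => Real.exp (-ε * x) :=
        .of_bound' (.of_forall fun x => by simp [norm_exp])
      refine (hexp.mul (hgrowth.comp_tendsto hreal)).trans_tendsto (hdecay.congr' ?_)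
      filter_upwards [eventually_ge_atTop 0] with x hx
      simp [abs_of_nonneg hx, mul_comm]
  refine le_of_tendsto (f := fun ε : ℝ => ‖cexp (-ε * z) * f z‖) (x := 𝓝[>] 0) ?_
    (eventually_mem_nhdsWithin.mono fun ε hε => hdamped hε)
  exact (Continuous.tendsto' (by fun_prop) _ _ (by simp)).mono_left nhdsWithin_le_nhds

/-- An entire function that behaves like a completed `L`-function satisfying the Riemann hypothesis:
it has no zeros to the right of the critical line, its modulus is symmetric about this line, and
its quotients across the line have polynomial growth. -/
structure HasCriticalLine (G : ℂ → ℂ) : Prop where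
  differentiable : Differentiable ℂ G
  ne_zero : ∀ s : ℂ, 1 / 2 < s.re → G s ≠ 0
  norm_one_sub_conj : ∀ s : ℂ, 1 / 2 < s.re → ‖G (1 - conj s)‖ = ‖G s‖
  growthOn_div : ∀ᶠ h : ℝ in 𝓝[>] 0, ∃ r,
    GrowthOn (fun z => G (1 / 2 + z - h) / G (1 / 2 + z + h)) {z | 0 < z.re} r

namespace HasCriticalLine

variable {G : ℂ → ℂ}

lemma eventually_norm_le (hG : HasCriticalLine G) {s : ℂ} (hs : 1 / 2 ≤ s.re) :
    ∀ᶠ h : ℝ in 𝓝[>] 0, ‖G (s - h)‖ ≤ ‖G (s + h)‖ := by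
  filter_upwards [hG.growthOn_div, self_mem_nhdsWithin] with h ⟨r, hgrowth⟩ (hh : 0 < h)
  have hne (z : ℂ) (hz : 0 ≤ z.re) : G (1 / 2 + z + h) ≠ 0 :=
    hG.ne_zero _ (by simp; linarith)
  have hdiff : DifferentiableOn ℂ (fun z => G (1 / 2 + z - h) / G (1 / 2 + z + h))
      {z | 0 ≤ z.re} := by
    have := hG.differentiable
    exact DifferentiableOn.div (by fun_prop) (by fun_prop) hne
  have hle := hgrowth.norm_le_of_norm_le_on_imaginary_axis (C := 1) (z := s - 1 / 2)
    (DifferentiableOn.diffContOnCl (by rwa [closure_setOfPred_lt_re])) (fun y => ?_)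
    (by simpa using hs)
  · rwa [norm_div, div_le_one (norm_pos_iff.mpr (hne _ (by simpa using hs))),
      add_sub_cancel] at hle
  · have hreflect : 1 - conj (1 / 2 + y * I + h) = 1 / 2 + y * I - h := by
      apply Complex.ext <;> simp
      ring
    rw [norm_div, ← hreflect, hG.norm_one_sub_conj _ (by simpa)]
    exact div_self_le_one _

lemma re_logDeriv_nonneg (hG : HasCriticalLine G) {s : ℂ} (hs : 1 / 2 < s.re) :
    0 ≤ (logDeriv G s).re := by
  have hne := hG.ne_zero s hs
  have hderiv : HasDerivAt (fun h : ℂ => G (s - h) / G (s + h)) (-2 * logDeriv G s) (0 : ℝ) := by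
    have hsub : HasDerivAt (fun h : ℂ => G (s - h)) (-deriv G s) (0 : ℝ) := by
      simpa using HasDerivAt.comp_const_sub s (0 : ℝ) (hG.differentiable _).hasDerivAt
    have hadd : HasDerivAt (fun h : ℂ => G (s + h)) (deriv G s) (0 : ℝ) := by
      simpa using HasDerivAt.comp_const_add s (0 : ℝ) (hG.differentiable _).hasDerivAt
    refine (hsub.div hadd (by simpa using hne)).congr_deriv ?_
    rw [ofReal_zero, sub_zero, add_zero, logDeriv_apply]
    field_simp
    ring
  have hslope := hderiv.real_of_complex.tendsto_slope_zero_right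
  suffices (-2 * logDeriv G s).re ≤ 0 by
    rw [show (-2 : ℂ) = (-2 : ℝ) by simp, re_ofReal_mul] at this
    linarith
  refine le_of_tendsto hslope ?_
  filter_upwards [hG.eventually_norm_le hs.le, self_mem_nhdsWithin] with h hle (hh : 0 < h)
  have hquot : (G (s - h) / G (s + h)).re ≤ 1 :=
    (re_le_norm _).trans (by rw [norm_div]; exact div_le_one_of_le₀ hle (norm_nonneg _))
  rw [zero_add, ofReal_zero, sub_zero, add_zero, div_self hne, one_re, smul_eq_mul]
  exact mul_nonpos_of_nonneg_of_nonpos (inv_nonneg.mpr hh.le) (sub_nonpos.mpr hquot)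

lemma dslope_eq_div {ρ : ℂ} (hρ : G ρ = 0) {z : ℂ} (hz : z ≠ ρ) :
    dslope G ρ z = G z / (z - ρ) := by
  rw [dslope_of_ne _ hz, slope_def_field, hρ, sub_zero]

lemma dslope {ρ : ℂ} (hG : HasCriticalLine G) (hρ : ρ.re = 1 / 2) (hzero : G ρ = 0) :
    HasCriticalLine (dslope G ρ) where
  differentiable := by
    rw [← differentiableOn_univ]
    exact (differentiableOn_dslope univ_mem).mpr hG.differentiable.differentiableOn
  ne_zero s hs := by
    have hsρ : s ≠ ρ := by rintro rfl; exact hs.ne' hρ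
    rw [dslope_eq_div hzero hsρ]
    exact div_ne_zero (hG.ne_zero s hs) (sub_ne_zero.mpr hsρ)
  norm_one_sub_conj s hs := by
    have hsρ : s ≠ ρ := by rintro rfl; exact hs.ne' hρ
    have hsρ' : 1 - conj s ≠ ρ := by
      rintro rfl
      simp at hρ
      linarith
    have hρc : conj ρ = 1 - ρ := by
      apply Complex.ext <;> simp [hρ]
      norm_num
    have hdist : 1 - conj s - ρ = -conj (s - ρ) := by
      rw [map_sub, hρc]
      ring
    rw [dslope_eq_div hzero hsρ, dslope_eq_div hzero hsρ', norm_div, norm_div, hdist, norm_neg,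
      norm_conj, hG.norm_one_sub_conj s hs]
  growthOn_div := by
    filter_upwards [hG.growthOn_div, self_mem_nhdsWithin] with h ⟨r, hgrowth⟩ (hh : 0 < h)
    have hnum := (GrowthOn.id {z | 0 < z.re}).sub_const zero_le_one (ρ - 1 / 2 - h)
    refine ⟨_, IsBigO.congr' ((hgrowth.mul hnum).mul (.inv_sub (ρ - 1 / 2 + h) _)) ?_ .rfl⟩
    filter_upwards [(GrowthOn.tendsto_norm_atTop _).eventually_gt_atTop ‖ρ - 1 / 2 + h‖,
      mem_inf_of_right (mem_principal_self _)] with z hz (hz0 : 0 < z.re)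
    have hsub : 1 / 2 + z - h ≠ ρ := by
      rintro rfl
      rw [show 1 / 2 + z - h - 1 / 2 + h = z by ring] at hz
      exact hz.false
    have hadd : 1 / 2 + z + h ≠ ρ := by
      rintro rfl
      simp at hρ
      linarith
    rw [dslope_eq_div hzero hsub, dslope_eq_div hzero hadd]
    rw [← sub_ne_zero] at hsub hadd
    rw [show z - (ρ - 1 / 2 - h) = 1 / 2 + z + h - ρ by ring,
      show z - (ρ - 1 / 2 + h) = 1 / 2 + z - h - ρ by ring]
    field_simp

lemma logDeriv_eq_inv_add {ρ s : ℂ} (hG : Differentiable ℂ G) (hρ : G ρ = 0) (hs : s ≠ ρ)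
    (hGs : G s ≠ 0) : logDeriv G s = (s - ρ)⁻¹ + logDeriv (_root_.dslope G ρ) s := by
  have hfactor : G = fun z => (z - ρ) * _root_.dslope G ρ z := by
    ext z
    simpa [hρ] using (sub_smul_dslope G ρ z).symm
  have hdiff : Differentiable ℂ (_root_.dslope G ρ) := by
    rw [← differentiableOn_univ]
    exact (differentiableOn_dslope univ_mem).mpr hG.differentiableOn
  have hne : _root_.dslope G ρ s ≠ 0 := by
    rw [dslope_eq_div hρ hs]
    exact div_ne_zero hGs (sub_ne_zero.mpr hs)
  conv_lhs => rw [hfactor]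
  rw [logDeriv_mul (f := fun z => z - ρ) s (sub_ne_zero.mpr hs) hne (by fun_prop) (hdiff s),
    logDeriv_apply, deriv_sub_const, deriv_id'', one_div]

lemma sum_re_inv_sub_le (hG : HasCriticalLine G) {S : Finset ℂ}
    (hS : ∀ ρ ∈ S, ρ.re = 1 / 2 ∧ G ρ = 0) {s : ℂ} (hs : 1 / 2 < s.re) :
    ∑ ρ ∈ S, ((s - ρ)⁻¹).re ≤ (logDeriv G s).re := by
  induction S using Finset.induction_on generalizing G with
  | empty => simpa using hG.re_logDeriv_nonneg hs
  | insert ρ S hρS ih =>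
    obtain ⟨⟨hρ, hzero⟩, hS⟩ := Finset.forall_mem_insert .. |>.mp hS
    have hsρ : s ≠ ρ := by rintro rfl; exact hs.ne' hρ
    have hrest := ih (hG.dslope hρ hzero) fun z hz => ⟨(hS z hz).1, by
      rw [dslope_eq_div hzero (ne_of_mem_of_not_mem hz hρS), (hS z hz).2, zero_div]⟩
    rw [Finset.sum_insert hρS,
      logDeriv_eq_inv_add hG.differentiable hzero hsρ (hG.ne_zero s hs), add_re]
    gcongr

end HasCriticalLine

lemma Gammaℝ_conj (s : ℂ) : Gammaℝ (conj s) = conj (Gammaℝ s) := by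
  have hcpow : (Real.pi : ℂ) ^ (-conj s / 2) = conj ((Real.pi : ℂ) ^ (-s / 2)) := by
    have harg : (Real.pi : ℂ).arg ≠ Real.pi := by
      simpa [arg_ofReal_of_nonneg Real.pi_pos.le] using Real.pi_ne_zero.symm
    conv_lhs => rw [← conj_ofReal Real.pi, conj_cpow _ _ harg]
    simp [conj_ofNat]
  rw [Gammaℝ_def, Gammaℝ_def, map_mul, ← Gamma_conj, hcpow, map_div₀, conj_ofNat]

lemma hasDerivAt_Gammaℝ {s : ℂ} (hs : 0 < s.re) :
    HasDerivAt Gammaℝ (Gammaℝ s * (digamma (s / 2) - Real.log Real.pi) / 2) s := by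
  have hs2 : 0 < (s / 2).re := by simpa
  have hpi : (Real.pi : ℂ) ≠ 0 := mod_cast Real.pi_ne_zero
  have hGamma := (hasDerivAt_Gamma_of_re_pos hs2).comp s ((hasDerivAt_id s).div_const 2)
  have hcpow := ((hasDerivAt_id s).neg.div_const 2).const_cpow (c := Real.pi) (.inl hpi)
  refine (hcpow.mul hGamma).congr_deriv ?_
  have hne := Gamma_ne_zero_of_re_pos hs2
  simp only [Gammaℝ_def, digamma_def, logDeriv_apply, ofReal_log Real.pi_pos.le, Pi.neg_apply, id,
    Function.comp_apply]
  field_simp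
  ring

lemma exists_norm_Gammaℝ_le_mul_norm_Gammaℝ_add {h σ : ℝ} (hh : 0 < h) (hσ : 0 < σ) :
    ∃ C : ℝ, ∀ z : ℂ, σ ≤ z.re → ‖Gammaℝ z‖ ≤ C * ‖Gammaℝ (z + h)‖ := by
  obtain ⟨C, hC⟩ := exists_norm_Gamma_le_mul_norm_Gamma_add (half_pos hh) (half_pos hσ)
  refine ⟨Real.pi ^ (h / 2) * C, fun z hz => ?_⟩
  have hpow : Real.pi ^ (-z / 2).re = Real.pi ^ (h / 2) * Real.pi ^ (-(z + h) / 2).re := by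
    rw [← Real.rpow_add Real.pi_pos]
    congr 1
    simp
    ring
  have hz2 := hC (z / 2) (by simpa using by linarith)
  rw [ofReal_div, ofReal_ofNat, ← add_div] at hz2
  rw [Gammaℝ_def, Gammaℝ_def, norm_mul, norm_mul, norm_cpow_eq_rpow_re_of_pos Real.pi_pos,
    norm_cpow_eq_rpow_re_of_pos Real.pi_pos, hpow]
  calc _ ≤ Real.pi ^ (h / 2) * Real.pi ^ (-(z + h) / 2).re * (C * ‖Gamma ((z + h) / 2)‖) := by
        gcongr
    _ = _ := by ring

/-- The elementary factor `q ^ (s / 2) * s ^ j * Γ_ℝ(s + κ)` completing an `L`-function of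
conductor `q` and parity `κ`; the factor `s ^ j` serves to compensate a pole. -/
def archimedeanFactor (q κ j : ℕ) (s : ℂ) : ℂ :=
  (q : ℂ) ^ (s / 2) * s ^ j * Gammaℝ (s + κ)

section archimedeanFactor

variable {q κ j : ℕ}

lemma archimedeanFactor_ne_zero (hq : 1 ≤ q) {s : ℂ} (hs : 0 < s.re) :
    archimedeanFactor q κ j s ≠ 0 := by
  have hs0 : s ≠ 0 := ne_zero_of_re_pos hs
  have hq0 : (q : ℂ) ≠ 0 := mod_cast Nat.one_le_iff_ne_zero.mp hq
  exact mul_ne_zero (mul_ne_zero (by simp [cpow_eq_zero_iff, hq0]) (pow_ne_zero _ hs0))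
    (Gammaℝ_ne_zero_of_re_pos (by rw [add_re, natCast_re]; positivity))

lemma hasDerivAt_archimedeanFactor (hq : 1 ≤ q) {s : ℂ} (hs : 0 < s.re) :
    HasDerivAt (archimedeanFactor q κ j) (archimedeanFactor q κ j s *
      (Real.log q / 2 + j / s + (digamma ((s + κ) / 2) - Real.log Real.pi) / 2)) s := by
  have hs0 : s ≠ 0 := ne_zero_of_re_pos hs
  have hq0 : (q : ℂ) ≠ 0 := mod_cast Nat.one_le_iff_ne_zero.mp hq
  have hcpow := ((hasDerivAt_id s).div_const 2).const_cpow (c := q) (.inl hq0)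
  have hsκ : 0 < (s + κ).re := by
    rw [add_re, natCast_re]
    positivity
  have hGamma := (hasDerivAt_Gammaℝ hsκ).comp_add_const s κ
  have hpow : j * s ^ (j - 1) = s ^ j * (j / s) := by
    cases j with
    | zero => simp
    | succ j =>
      rw [pow_succ, Nat.add_sub_cancel]
      field_simp
  refine ((hcpow.mul (hasDerivAt_pow j s)).mul hGamma).congr_deriv ?_
  simp only [archimedeanFactor, natCast_log, hpow, id, Pi.mul_apply]
  ring

lemma norm_logDeriv_archimedeanFactor_le (hq : 1 ≤ q) (hκ : κ ≤ 1) (hj : j ≤ 1) {s : ℂ}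
    (hs : 1 / 2 < s.re) :
    ‖logDeriv (archimedeanFactor q κ j) s‖ ≤ Real.log q + 24 * Real.log (2 + ‖s‖) := by
  have hs0 : 0 < s.re := by linarith
  have hκ' : (κ : ℝ) ≤ 1 := mod_cast hκ
  have hj' : (j : ℝ) ≤ 1 := mod_cast hj
  have hnorm : 1 / 2 < ‖s‖ := hs.trans_le (re_le_norm s)
  have hlogq : 0 ≤ Real.log q := Real.log_natCast_nonneg q
  have hq2 : ‖(Real.log q / 2 : ℂ)‖ ≤ Real.log q := by
    rw [norm_div, norm_real, Real.norm_of_nonneg hlogq, norm_ofNat]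
    linarith
  have hjs : ‖(j / s : ℂ)‖ ≤ 2 := by
    rw [norm_div, norm_natCast, div_le_iff₀ (by linarith)]
    linarith
  have hlogpi : ‖(Real.log Real.pi : ℂ)‖ ≤ 3 := by
    rw [norm_real, Real.norm_of_nonneg (Real.log_nonneg (by linarith [Real.pi_gt_three]))]
    linarith [Real.log_le_sub_one_of_pos Real.pi_pos, Real.pi_lt_four]
  have hlog2 : Real.log 2 ≤ Real.log (2 + ‖s‖) :=
    Real.log_le_log two_pos (by linarith)
  have hdigamma : ‖digamma ((s + κ) / 2)‖ ≤ 32 * Real.log (2 + ‖s‖) := by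
    have hnorm2 : ‖(s + κ) / 2‖ ≤ ‖s‖ + 1 := by
      have := norm_add_le s κ
      rw [norm_natCast] at this
      rw [norm_div, norm_ofNat]
      linarith
    calc _ ≤ 16 * Real.log (2 + ‖(s + κ) / 2‖) := norm_digamma_le (by simp; linarith)
      _ ≤ 16 * Real.log ((2 + ‖s‖) ^ 2) := by gcongr; nlinarith
      _ = 32 * Real.log (2 + ‖s‖) := by rw [Real.log_pow]; ring
  rw [logDeriv_apply, (hasDerivAt_archimedeanFactor hq hs0).deriv,
    mul_div_cancel_left₀ _ (archimedeanFactor_ne_zero hq hs0)]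
  calc _ ≤ ‖(Real.log q / 2 : ℂ)‖ + ‖(j / s : ℂ)‖ +
        (‖digamma ((s + κ) / 2)‖ + ‖(Real.log Real.pi : ℂ)‖) / 2 := by
        refine (norm_add_le _ _).trans (add_le_add (norm_add_le _ _) ?_)
        rw [norm_div, norm_ofNat]
        gcongr
        exact norm_sub_le _ _
    _ ≤ _ := by linarith [Real.log_two_gt_d9]

lemma exists_norm_archimedeanFactor_le_mul_norm_archimedeanFactor_add (hq : 1 ≤ q) {h σ : ℝ}
    (hh : 0 < h) (hσ : 0 < σ) : ∃ C : ℝ, ∀ z : ℂ, σ ≤ z.re →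
      ‖archimedeanFactor q κ j z‖ ≤ C * ‖archimedeanFactor q κ j (z + h)‖ := by
  obtain ⟨C, hC⟩ := exists_norm_Gammaℝ_le_mul_norm_Gammaℝ_add hh hσ
  refine ⟨C, fun z hz => ?_⟩
  have hq0 : 0 < q := hq
  have hcpow : ‖(q : ℂ) ^ (z / 2)‖ ≤ ‖(q : ℂ) ^ ((z + h) / 2)‖ := by
    rw [norm_natCast_cpow_of_pos hq0, norm_natCast_cpow_of_pos hq0]
    exact Real.rpow_le_rpow_of_exponent_le (mod_cast hq) (by simp; linarith)
  have hnorm : ‖z‖ ≤ ‖z + h‖ := by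
    rw [← abs_norm, ← abs_norm (z + h), ← sq_le_sq, ← normSq_eq_norm_sq, ← normSq_eq_norm_sq,
      normSq_apply, normSq_apply, add_re, add_im, ofReal_re, ofReal_im, add_zero]
    nlinarith
  have hGamma := hC (z + κ) (by simpa using by linarith [κ.cast_nonneg (α := ℝ)])
  rw [add_right_comm] at hGamma
  simp only [archimedeanFactor, norm_mul, norm_pow]
  calc _ ≤ ‖(q : ℂ) ^ ((z + h) / 2)‖ * ‖z + h‖ ^ j * (C * ‖Gammaℝ (z + h + κ)‖) := by gcongr
    _ = _ := by ring

end archimedeanFactor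

/-- `Λ` is the completion of `L` by `archimedeanFactor q κ j`, and `L` satisfies the Riemann
hypothesis. Here `L` is `L(s, χ)`, or `(s - 1) ζ(s)` for the trivial character, so that `L` and `Λ`
are entire in both cases. -/
structure IsCompletedLFunction (q κ j : ℕ) (L Λ : ℂ → ℂ) : Prop where
  one_le_conductor : 1 ≤ q
  parity_le_one : κ ≤ 1
  pole_order_le_one : j ≤ 1
  differentiable : Differentiable ℂ L
  differentiable_completed : Differentiable ℂ Λ
  exists_growthOn : ∃ A, 0 ≤ A ∧ GrowthOn L {s | 1 / 4 ≤ s.re} A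
  one_half_le_norm : ∀ s : ℂ, 2 ≤ s.re → 1 / 2 ≤ ‖L s‖
  ne_zero : ∀ s : ℂ, 1 / 2 < s.re → L s ≠ 0
  completed_eq : ∀ s : ℂ, 0 < s.re → Λ s = archimedeanFactor q κ j s * L s
  norm_completed_one_sub_conj : ∀ s : ℂ, 1 / 2 < s.re → ‖Λ (1 - conj s)‖ = ‖Λ s‖

namespace IsCompletedLFunction

variable {q κ j : ℕ} {L Λ : ℂ → ℂ}

lemma growthOn_logDeriv (h : IsCompletedLFunction q κ j L Λ) {ε r : ℝ} (hε : 0 < ε) (hr : 0 < r) :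
    GrowthOn (logDeriv L) {s | 1 / 2 + ε ≤ s.re} r := by
  obtain ⟨A, hA, hgrowth⟩ := h.exists_growthOn
  exact _root_.growthOn_logDeriv hA (by norm_num) one_half_pos h.differentiable.differentiableOn
    h.ne_zero (hgrowth.mono_set fun s (hs : 1 / 2 < s.re) => by simp; linarith)
    h.one_half_le_norm hε hr

lemma exists_growthOn_inv (h : IsCompletedLFunction q κ j L Λ) {ε : ℝ} (hε : 0 < ε) :
    ∃ A, 0 ≤ A ∧ GrowthOn L⁻¹ {s | 1 / 2 + ε ≤ s.re} A := by
  obtain ⟨A, hA, hgrowth⟩ := h.exists_growthOn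
  exact _root_.exists_growthOn_inv hA (by norm_num) one_half_pos
    h.differentiable.differentiableOn h.ne_zero
    (hgrowth.mono_set fun s (hs : 1 / 2 < s.re) => by simp; linarith) h.one_half_le_norm hε

lemma hasCriticalLine (h : IsCompletedLFunction q κ j L Λ) : HasCriticalLine Λ where
  differentiable := h.differentiable_completed
  ne_zero s hs := by
    have hs0 : 0 < s.re := by linarith
    rw [h.completed_eq s hs0]
    exact mul_ne_zero (archimedeanFactor_ne_zero h.one_le_conductor hs0) (h.ne_zero s hs)
  norm_one_sub_conj := h.norm_completed_one_sub_conj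
  growthOn_div := by
    filter_upwards [Ioo_mem_nhdsGT (show (0 : ℝ) < 1 / 8 by norm_num)] with ε ⟨hε, hε8⟩
    obtain ⟨A, -, hgrowth⟩ := h.exists_growthOn
    obtain ⟨A', -, hinv⟩ := h.exists_growthOn_inv hε
    obtain ⟨C, hC⟩ := exists_norm_archimedeanFactor_le_mul_norm_archimedeanFactor_add (κ := κ)
      (j := j) h.one_le_conductor (h := 2 * ε) (σ := 1 / 4) (by positivity) (by norm_num)
    have hsub : MapsTo ((1 / 2 - ε : ℂ) + ·) {z : ℂ | 0 < z.re} {s | 1 / 4 ≤ s.re} :=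
      fun z (hz : 0 < z.re) => by simp; linarith
    have hadd : MapsTo ((1 / 2 + ε : ℂ) + ·) {z : ℂ | 0 < z.re} {s | 1 / 2 + ε ≤ s.re} :=
      fun z (hz : 0 < z.re) => by simp; linarith
    have harch : GrowthOn (fun z => archimedeanFactor q κ j (1 / 2 - ε + z) /
        archimedeanFactor q κ j (1 / 2 + ε + z)) {z | 0 < z.re} 0 := by
      refine .of_norm_le (C := C) fun z (hz : 0 < z.re) => ?_
      have hle := hC (1 / 2 - ε + z) (hsub hz)
      rw [ofReal_mul, ofReal_ofNat, show (1 / 2 - ε + z + 2 * ε : ℂ) = 1 / 2 + ε + z by ring] at hle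
      rwa [norm_div, div_le_iff₀]
      exact norm_pos_iff.mpr <| archimedeanFactor_ne_zero h.one_le_conductor <| by simp; linarith
    refine ⟨_, ((harch.mul (hgrowth.comp_const_add _ hsub)).mul
      (hinv.comp_const_add _ hadd)).congr' ?_ .rfl⟩
    filter_upwards [mem_inf_of_right (mem_principal_self _)] with z (hz : 0 < z.re)
    rw [add_sub_right_comm, add_right_comm, h.completed_eq _ (by simp; linarith),
      h.completed_eq _ (by simp; linarith), Pi.inv_apply]
    ring

lemma logDeriv_completed (h : IsCompletedLFunction q κ j L Λ) {s : ℂ} (hs : 1 / 2 < s.re) :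
    logDeriv Λ s = logDeriv (archimedeanFactor q κ j) s + logDeriv L s := by
  have hs0 : 0 < s.re := by linarith
  have heq : Λ =ᶠ[𝓝 s] fun z => archimedeanFactor q κ j z * L z := by
    filter_upwards [(isOpen_lt continuous_const continuous_re).mem_nhds hs0] with z hz
    exact h.completed_eq z hz
  rw [(logDeriv_congr_nhds heq).eq_of_nhds,
    logDeriv_mul s (archimedeanFactor_ne_zero h.one_le_conductor hs0) (h.ne_zero s hs)
      (hasDerivAt_archimedeanFactor h.one_le_conductor hs0).differentiableAt (h.differentiable s)]

lemma norm_logDeriv_completed_sub_le (h : IsCompletedLFunction q κ j L Λ) {s : ℂ}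
    (hs : 1 / 2 < s.re) :
    ‖logDeriv Λ s - logDeriv L s‖ ≤ Real.log q + 24 * Real.log (2 + ‖s‖) := by
  rw [h.logDeriv_completed hs, add_sub_cancel_right]
  exact norm_logDeriv_archimedeanFactor_le h.one_le_conductor h.parity_le_one
    h.pole_order_le_one hs

end IsCompletedLFunction

section NontrivialCharacter

variable {N : ℕ}

lemma inv_apply_eq_conj [NeZero N] (χ : DirichletCharacter ℂ N) (a : ZMod N) :
    χ⁻¹ a = conj (χ a) :=
  (MulChar.star_apply' χ a).symm

lemma inv_apply_neg_one [NeZero N] (χ : DirichletCharacter ℂ N) : χ⁻¹ (-1) = χ (-1) := by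
  rcases χ.even_or_odd with h | h <;> rw [inv_apply_eq_conj, h] <;> simp

lemma exists_gammaFactor_eq (χ : DirichletCharacter ℂ N) :
    ∃ κ : ℕ, κ ≤ 1 ∧ ∀ s, gammaFactor χ s = Gammaℝ (s + κ) := by
  rcases χ.even_or_odd with h | h
  · exact ⟨0, zero_le_one, fun s => by rw [h.gammaFactor_def, Nat.cast_zero, add_zero]⟩
  · exact ⟨1, le_rfl, fun s => by rw [h.gammaFactor_def, Nat.cast_one]⟩

lemma gammaFactor_inv_conj [NeZero N] (χ : DirichletCharacter ℂ N) (s : ℂ) :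
    gammaFactor χ⁻¹ (conj s) = conj (gammaFactor χ s) := by
  rcases χ.even_or_odd with h | h
  · have h' : χ⁻¹.Even := (inv_apply_neg_one χ).trans h
    rw [h.gammaFactor_def, h'.gammaFactor_def, Gammaℝ_conj]
  · have h' : χ⁻¹.Odd := (inv_apply_neg_one χ).trans h
    rw [h.gammaFactor_def, h'.gammaFactor_def, ← Gammaℝ_conj, map_add, map_one]

lemma gammaFactor_ne_zero (χ : DirichletCharacter ℂ N) {s : ℂ} (hs : 0 < s.re) :
    gammaFactor χ s ≠ 0 := by
  obtain ⟨κ, -, hκ⟩ := exists_gammaFactor_eq χ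
  rw [hκ]
  exact Gammaℝ_ne_zero_of_re_pos (by rw [add_re, natCast_re]; positivity)

variable [NeZero N] {χ : DirichletCharacter ℂ N}

lemma completedLFunction_eq_gammaFactor_mul (χ : DirichletCharacter ℂ N) {s : ℂ} (hs : 0 < s.re) :
    completedLFunction χ s = gammaFactor χ s * LFunction χ s := by
  rw [LFunction_eq_completed_div_gammaFactor χ s (.inl (ne_zero_of_re_pos hs)),
    mul_div_cancel₀ _ (gammaFactor_ne_zero χ hs)]

lemma LFunction_inv_conj (χ : DirichletCharacter ℂ N) {s : ℂ} (hs : 1 < s.re) :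
    LFunction χ⁻¹ (conj s) = conj (LFunction χ s) := by
  rw [LFunction_eq_LSeries _ (by simpa using hs), LFunction_eq_LSeries _ hs, LSeries, LSeries,
    conj_tsum]
  refine tsum_congr fun n => ?_
  rcases eq_or_ne n 0 with rfl | hn
  · simp
  · rw [LSeries.term_of_ne_zero hn, LSeries.term_of_ne_zero hn, map_div₀, inv_apply_eq_conj,
      ← conj_natCast n, conj_cpow _ _ (by simp [Real.pi_ne_zero.symm]), conj_natCast, conj_conj]

lemma completedLFunction_inv_conj (hχ : χ ≠ 1) (s : ℂ) :
    completedLFunction χ⁻¹ (conj s) = conj (completedLFunction χ s) := by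
  have hconj : Differentiable ℂ fun s => conj (completedLFunction χ (conj s)) := fun s => by
    simpa [Function.comp_def] using (differentiable_completedLFunction hχ (conj s)).conj_conj
  have hinv := differentiable_completedLFunction (inv_ne_one.mpr hχ)
  have heq := AnalyticOnNhd.eq_of_eventuallyEq (z₀ := 2)
    (hinv.differentiableOn.analyticOnNhd isOpen_univ)
    (hconj.differentiableOn.analyticOnNhd isOpen_univ) ?_
  · simpa using congrFun heq (conj s)
  filter_upwards [(isOpen_lt continuous_const continuous_re).mem_nhds
    (show (2 : ℂ) ∈ {s | 1 < s.re} by simp)] with s (hs : 1 < s.re)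
  have hs' : 1 < (conj s).re := hs
  rw [completedLFunction_eq_gammaFactor_mul _ (by linarith),
    completedLFunction_eq_gammaFactor_mul _ (by linarith), map_mul, ← gammaFactor_inv_conj,
    ← LFunction_inv_conj _ hs', conj_conj]

lemma norm_completedLFunction_one_sub_conj (hχ : χ.IsPrimitive) (hχ1 : χ ≠ 1) (s : ℂ) :
    ‖completedLFunction χ (1 - conj s)‖ =
      N ^ (s.re - 1 / 2) * ‖rootNumber χ‖ * ‖completedLFunction χ s‖ := by
  rw [hχ.completedLFunction_one_sub, completedLFunction_inv_conj hχ1, norm_mul, norm_mul, norm_conj,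
    norm_natCast_cpow_of_pos (NeZero.pos N)]
  simp

-- The functional equation at `s = 2` and at `s = -1` exchanges the same two values.
lemma norm_rootNumber_eq_one (hχ : χ.IsPrimitive) (hχ1 : χ ≠ 1) : ‖rootNumber χ‖ = 1 := by
  have hN : (0 : ℝ) < N := mod_cast NeZero.pos N
  have hne : completedLFunction χ 2 ≠ 0 := by
    rw [completedLFunction_eq_gammaFactor_mul χ (by simp)]
    exact mul_ne_zero (gammaFactor_ne_zero χ (by simp))
      (LFunction_ne_zero_of_one_le_re χ (.inl hχ1) (by simp))
  have htwo := norm_completedLFunction_one_sub_conj hχ hχ1 2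
  have hneg := norm_completedLFunction_one_sub_conj hχ hχ1 (-1)
  rw [map_neg, map_one, show (1 - -1 : ℂ) = 2 by norm_num, show (-1 : ℂ) = 1 - conj 2 by
    rw [conj_ofNat]; norm_num, htwo] at hneg
  have hpow : (N : ℝ) ^ ((1 - conj (2 : ℂ)).re - 1 / 2) * N ^ ((2 : ℂ).re - 1 / 2) = 1 := by
    rw [← Real.rpow_add hN]
    norm_num
  have hsq : ‖rootNumber χ‖ ^ 2 = 1 :=
    mul_right_cancel₀ (norm_ne_zero_iff.mpr hne) <| by
      linear_combination -(‖rootNumber χ‖ ^ 2 * ‖completedLFunction χ 2‖ * hpow) - hneg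
  exact (pow_eq_one_iff_of_nonneg (norm_nonneg _) two_ne_zero).mp hsq

lemma LFunction_ne_zero_of_GRHchar (hG : GRHchar χ) {s : ℂ} (hs : 1 / 2 < s.re)
    (h : χ ≠ 1 ∨ s ≠ 1) : LFunction χ s ≠ 0 := fun hzero => by
  rcases lt_or_ge s.re 1 with hs1 | hs1
  · exact hs.ne' (hG s (by linarith) hs1 hzero)
  · exact LFunction_ne_zero_of_one_le_re χ h hs1 hzero

lemma exists_isCompletedLFunction_LFunction (hχ : χ.IsPrimitive) (hχ1 : χ ≠ 1) (hG : GRHchar χ) :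
    ∃ κ, IsCompletedLFunction N κ 0 (LFunction χ)
      fun s => (N : ℂ) ^ (s / 2) * completedLFunction χ s := by
  obtain ⟨κ, hκ1, hκ⟩ := exists_gammaFactor_eq χ
  have hN : (N : ℂ) ≠ 0 := NeZero.ne _
  exact ⟨κ, {
    one_le_conductor := NeZero.pos N
    parity_le_one := hκ1
    pole_order_le_one := zero_le_one
    differentiable := differentiable_LFunction hχ1
    differentiable_completed := Differentiable.mul
      (fun s => .const_cpow (by fun_prop) (.inl hN)) (differentiable_completedLFunction hχ1)
    exists_growthOn := ⟨1, zero_le_one, growthOn_LFunction hχ1 (by norm_num)⟩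
    one_half_le_norm := fun s hs => one_half_le_norm_LFunction χ hs
    ne_zero := fun s hs => LFunction_ne_zero_of_GRHchar hG hs (.inl hχ1)
    completed_eq := fun s hs => by
      rw [completedLFunction_eq_gammaFactor_mul χ hs, hκ, archimedeanFactor, pow_zero, mul_one,
        mul_assoc]
    norm_completed_one_sub_conj := fun s _ => by
      have hN' : 0 < N := NeZero.pos N
      rw [norm_mul, norm_mul, norm_completedLFunction_one_sub_conj hχ hχ1,
        norm_rootNumber_eq_one hχ hχ1, mul_one, ← mul_assoc, norm_natCast_cpow_of_pos hN',
        norm_natCast_cpow_of_pos hN', ← Real.rpow_add (mod_cast hN')]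
      congr 2
      simp
      ring }⟩

end NontrivialCharacter

section TrivialCharacter

lemma LFunctionTrivChar₁_one_eq {s : ℂ} (hs : s ≠ 1) :
    LFunctionTrivChar₁ 1 s = (s - 1) * riemannZeta s := by
  rw [LFunctionTrivChar₁, Function.update_of_ne hs, LFunctionTrivChar, LFunction_modOne_eq]

lemma mul_completedRiemannZeta₀_add_one_eq {s : ℂ} (hs : 0 < s.re) :
    s * (s - 1) * completedRiemannZeta₀ s + 1 = s * Gammaℝ s * LFunctionTrivChar₁ 1 s := by
  have hs0 : s ≠ 0 := ne_zero_of_re_pos hs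
  rcases eq_or_ne s 1 with rfl | hs1
  · simp [LFunctionTrivChar₁, Gammaℝ_one]
  · have hGamma := Gammaℝ_ne_zero_of_re_pos hs
    have hsub : 1 - s ≠ 0 := sub_ne_zero.mpr hs1.symm
    rw [LFunctionTrivChar₁_one_eq hs1, riemannZeta_def_of_ne_zero hs0, completedRiemannZeta_eq]
    field_simp
    ring

lemma LFunctionTrivChar₁_one_conj (s : ℂ) :
    LFunctionTrivChar₁ 1 (conj s) = conj (LFunctionTrivChar₁ 1 s) := by
  rcases eq_or_ne s 1 with rfl | hs
  · simp [LFunctionTrivChar₁]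
  · have hs' : conj s ≠ 1 := fun h => hs (by simpa using congrArg conj h)
    rw [LFunctionTrivChar₁_one_eq hs, LFunctionTrivChar₁_one_eq hs', riemannZeta_conj]
    simp

lemma isCompletedLFunction_LFunctionTrivChar₁ (hG : GRHchar (1 : DirichletCharacter ℂ 1)) :
    IsCompletedLFunction 1 0 1 (LFunctionTrivChar₁ 1)
      fun s => s * (s - 1) * completedRiemannZeta₀ s + 1 where
  one_le_conductor := le_rfl
  parity_le_one := zero_le_one
  pole_order_le_one := le_rfl
  differentiable := differentiable_LFunctionTrivChar₁ 1
  differentiable_completed := by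
    have := differentiable_completedZeta₀
    fun_prop
  exists_growthOn := ⟨2, zero_le_two, growthOn_LFunctionTrivChar₁ (by norm_num)⟩
  one_half_le_norm s hs := by
    have hzeta := one_half_le_norm_LFunction (1 : DirichletCharacter ℂ 1) hs
    rw [LFunction_modOne_eq] at hzeta
    have hsub : 1 ≤ ‖s - 1‖ := le_trans (by simp; linarith) (re_le_norm (s - 1))
    rw [LFunctionTrivChar₁_one_eq (by rintro rfl; norm_num at hs), norm_mul]
    nlinarith
  ne_zero s hs := by
    rcases eq_or_ne s 1 with rfl | hs1
    · exact LFunctionTrivChar₁_apply_one_ne_zero 1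
    · rw [LFunctionTrivChar₁_one_eq hs1, ← LFunction_modOne_eq (χ := 1)]
      exact mul_ne_zero (sub_ne_zero.mpr hs1) (LFunction_ne_zero_of_GRHchar hG hs (.inr hs1))
  completed_eq s hs := by
    simp [mul_completedRiemannZeta₀_add_one_eq hs, archimedeanFactor]
  norm_completed_one_sub_conj s hs := by
    have hs0 : 0 < s.re := by linarith
    rw [completedRiemannZeta₀_one_sub,
      show (1 - conj s) * (1 - conj s - 1) = conj s * (conj s - 1) by ring,
      mul_completedRiemannZeta₀_add_one_eq (by simpa using hs0),
      mul_completedRiemannZeta₀_add_one_eq hs0, Gammaℝ_conj, LFunctionTrivChar₁_one_conj,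
      ← map_mul, ← map_mul, norm_conj]

end TrivialCharacter

/-! ### The sum over zeros -/

section PoissonLog

variable {b : ℝ}

lemma integral_one_add_abs_rpow_neg_three_halves :
    ∫ y : ℝ, (1 + |y|) ^ (-(3 / 2) : ℝ) = 4 := by
  have hshift := (measurePreserving_add_left volume (1 : ℝ)).setIntegral_preimage_emb
    (measurableEmbedding_addLeft 1) (fun y => y ^ (-(3 / 2) : ℝ)) (Set.Ioi 1)
  rw [Set.preimage_const_add_Ioi, sub_self, integral_Ioi_rpow_of_lt (by norm_num) one_pos,
    Real.one_rpow] at hshift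
  rw [integral_comp_abs (f := fun y : ℝ => (1 + y) ^ (-(3 / 2) : ℝ)), hshift]
  norm_num

lemma poisson_mul_log_le (hb : 0 < b) (hb2 : b ≤ 2) (y : ℝ) :
    b / (b ^ 2 + y ^ 2) * Real.log (1 + |y|) ≤ 16 * (1 + |y|) ^ (-(3 / 2) : ℝ) := by
  have hy := abs_nonneg y
  rw [← sq_abs y]
  rcases le_or_gt |y| 1 with hy1 | hy1
  · have hlog : Real.log (1 + |y|) ≤ |y| := by
      linarith [Real.log_le_sub_one_of_pos (show 0 < 1 + |y| by positivity)]
    have hpoisson : b / (b ^ 2 + |y| ^ 2) * |y| ≤ 1 / 2 := by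
      rw [div_mul_eq_mul_div, div_le_iff₀ (by positivity)]
      nlinarith [sq_nonneg (b - |y|)]
    calc _ ≤ b / (b ^ 2 + |y| ^ 2) * |y| := by gcongr
      _ ≤ 16 * 2 ^ (-2 : ℝ) := hpoisson.trans (by norm_num)
      _ ≤ 16 * 2 ^ (-(3 / 2) : ℝ) := by gcongr <;> norm_num
      _ ≤ _ := mul_le_mul_of_nonneg_left
        (Real.rpow_le_rpow_of_nonpos (by positivity) (by linarith) (by norm_num)) (by norm_num)
  · have hlog : Real.log (1 + |y|) ≤ 2 * (1 + |y|) ^ (1 / 2 : ℝ) := by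
      have := Real.log_le_rpow_div (show 0 ≤ 1 + |y| by positivity) one_half_pos
      linarith
    have hpoisson : b / (b ^ 2 + |y| ^ 2) ≤ 8 * (1 + |y|) ^ (-2 : ℝ) := by
      rw [Real.rpow_neg (by positivity), Real.rpow_two, ← div_eq_mul_inv,
        div_le_div_iff₀ (by positivity) (by positivity)]
      nlinarith [sq_nonneg b]
    calc _ ≤ 8 * (1 + |y|) ^ (-2 : ℝ) * (2 * (1 + |y|) ^ (1 / 2 : ℝ)) := by
          have := Real.log_nonneg (show 1 ≤ 1 + |y| by linarith)
          gcongr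
      _ = 16 * ((1 + |y|) ^ (-2 : ℝ) * (1 + |y|) ^ (1 / 2 : ℝ)) := by ring
      _ = _ := by rw [← Real.rpow_add (by positivity)]; norm_num

lemma norm_verticalIntegral_smoothingKernel_mul_le_of_norm_le_log {f : ℂ → ℂ} {L A B : ℝ}
    (hL : 0 < L) (hbL : b * L = 2) (hb2 : b ≤ 2) (hB : 0 ≤ B)
    (hf : ∀ y : ℝ, ‖f ((-b : ℝ) + y * I)‖ ≤ A + B * Real.log (1 + |y|)) :
    ‖verticalIntegral (fun w => smoothingKernel L w * f w) (-b)‖ ≤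
      Real.pi / 2 * A + 32 * B := by
  have hb : 0 < b := by nlinarith
  have hpoisson := (integrable_poisson hb).const_mul (A / 2)
  have hpow := (integrable_one_add_abs_rpow (r := -(3 / 2)) (by norm_num)).const_mul (8 * B)
  refine (norm_integral_le_of_norm_le (hpoisson.add hpow) (.of_forall fun y => ?_)).trans ?_
  · calc ‖smoothingKernel L ((-b : ℝ) + y * I) * f ((-b : ℝ) + y * I)‖
      _ ≤ 2⁻¹ * (b / (b ^ 2 + y ^ 2)) * (A + B * Real.log (1 + |y|)) := by
        rw [norm_mul]
        exact mul_le_mul (norm_smoothingKernel_le hL hbL y) (hf y) (norm_nonneg _) (by positivity)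
      _ = A / 2 * (b / (b ^ 2 + y ^ 2)) +
          B / 2 * (b / (b ^ 2 + y ^ 2) * Real.log (1 + |y|)) := by ring
      _ ≤ A / 2 * (b / (b ^ 2 + y ^ 2)) + B / 2 * (16 * (1 + |y|) ^ (-(3 / 2) : ℝ)) := by
        exact add_le_add_right
          (mul_le_mul_of_nonneg_left (poisson_mul_log_le hb hb2 y) (by positivity)) _
      _ = _ := by rw [Pi.add_apply]; ring
  · refine (integral_add hpoisson hpow).trans_le (le_of_eq ?_)
    rw [integral_const_mul, integral_const_mul, integral_poisson hb,
      integral_one_add_abs_rpow_neg_three_halves]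
    ring

-- Positivity bounds the integral of `H` over `re w = -b` by `π re H(0)`, which is half of the
-- residue `2π re H(0)` met on the way to `re w = 1`; the other half survives.
lemma re_le_of_norm_sub_le_log {F H : ℂ → ℂ} {L A B r : ℝ} (hL : 0 < L) (hbL : b * L = 2)
    (hb2 : b ≤ 2) (hB : 0 ≤ B) (hr0 : 0 ≤ r) (hr1 : r < 1)
    (hF : DifferentiableOn ℂ F (re ⁻¹' Ici (-b))) (hH : DifferentiableOn ℂ H (re ⁻¹' Ici (-b)))
    (hFgrowth : GrowthOn F (re ⁻¹' Ici (-b)) r) (hHgrowth : GrowthOn H (re ⁻¹' Ici (-b)) r)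
    (hre : ∀ y : ℝ, 0 ≤ (H ((-b : ℝ) + y * I)).re)
    (hsub : ∀ y : ℝ, ‖H ((-b : ℝ) + y * I) - F ((-b : ℝ) + y * I)‖ ≤ A + B * Real.log (1 + |y|)) :
    Real.pi * (H 0).re ≤ 2 * Real.pi * ‖H 0 - F 0‖ +
      ‖verticalIntegral (fun w => smoothingKernel L w * F w) 1‖ +
      (Real.pi / 2 * A + 32 * B) := by
  have hb : 0 < b := by nlinarith
  have hline : re ⁻¹' {-b} ⊆ re ⁻¹' Ici (-b) := preimage_mono (by simp)
  have hstrip : re ⁻¹' Icc (-b) 1 ⊆ re ⁻¹' Ici (-b) := preimage_mono Icc_subset_Ici_self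
  have hshift := verticalIntegral_smoothingKernel_mul_shift hL hb one_pos hr0 hr1
    (hF.mono hstrip) (hFgrowth.mono_set hstrip)
  have hpos := norm_verticalIntegral_smoothingKernel_mul_le hr0 hr1 hH hHgrowth hL hbL hre
  have hlinear := verticalIntegral_sub
    (verticalIntegrable_smoothingKernel_mul hL (neg_ne_zero.mpr hb.ne') hr1
      (hH.continuousOn.mono hline) (hHgrowth.mono_set hline))
    (verticalIntegrable_smoothingKernel_mul hL (neg_ne_zero.mpr hb.ne') hr1
      (hF.continuousOn.mono hline) (hFgrowth.mono_set hline))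
  simp only [← mul_sub] at hlinear
  have hdiff := norm_verticalIntegral_smoothingKernel_mul_le_of_norm_le_log
    (f := fun w => H w - F w) hL hbL hb2 hB hsub
  set V := verticalIntegral (fun w => smoothingKernel L w * F w) 1
  set VH := verticalIntegral (fun w => smoothingKernel L w * H w) (-b)
  set VD := verticalIntegral (fun w => smoothingKernel L w * (H w - F w)) (-b)
  have hid : 2 * Real.pi * H 0 = 2 * Real.pi * (H 0 - F 0) + (V - VH + VD) := by
    linear_combination -hshift - hlinear
  have hnorm : 2 * Real.pi * ‖H 0‖ ≤ 2 * Real.pi * ‖H 0 - F 0‖ + (‖V‖ + ‖VH‖ + ‖VD‖) := by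
    have hpi : ‖(2 * Real.pi : ℂ)‖ = 2 * Real.pi := by simp [Real.pi_pos.le]
    rw [← hpi, ← norm_mul, ← norm_mul, hid]
    exact (norm_add_le _ _).trans (add_le_add_right
      ((norm_add_le _ _).trans (add_le_add_left (norm_sub_le _ _) _)) _)
  have hre0 := mul_le_mul_of_nonneg_left (re_le_norm (H 0)) (Real.two_pi_pos).le
  linarith

end PoissonLog

lemma one_le_log_of_three_le {x : ℝ} (hx : 3 ≤ x) : 1 ≤ Real.log x := by
  rw [Real.le_log_iff_exp_le (by linarith)]
  linarith [Real.exp_one_lt_d9]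

namespace IsCompletedLFunction

variable {q κ j : ℕ} {L Λ : ℂ → ℂ} {b ε r : ℝ} {s : ℂ}

lemma growthOn_logDeriv_completed (h : IsCompletedLFunction q κ j L Λ) (hε : 0 < ε) (hr : 0 < r) :
    GrowthOn (logDeriv Λ) {s | 1 / 2 + ε ≤ s.re} r := by
  have hlog : (fun z : ℂ => Real.log ‖z‖) =O[cobounded ℂ ⊓ 𝓟 {s | 1 / 2 + ε ≤ s.re}]
      fun z => ‖z‖ ^ r :=
    ((isLittleO_log_rpow_atTop hr).comp_tendsto (GrowthOn.tendsto_norm_atTop _)).isBigO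
  have hconst :=
    ((GrowthOn.const (Real.log q : ℂ) {s | 1 / 2 + ε ≤ s.re}).mono_exponent hr.le).norm_left
  have hdiff : GrowthOn (fun z => logDeriv Λ z - logDeriv L z) {s | 1 / 2 + ε ≤ s.re} r := by
    refine .trans (.of_bound' ?_) (hconst.add (hlog.const_mul_left 48))
    filter_upwards [mem_inf_of_right (mem_principal_self _),
      (GrowthOn.tendsto_norm_atTop _).eventually_ge_atTop 2] with z (hz : 1 / 2 + ε ≤ z.re) hz2
    have hlog2 : Real.log (2 + ‖z‖) ≤ 2 * Real.log ‖z‖ := by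
      have := Real.log_le_log (by positivity) (show 2 + ‖z‖ ≤ ‖z‖ ^ 2 by nlinarith)
      rwa [Real.log_pow, Nat.cast_ofNat] at this
    refine (h.norm_logDeriv_completed_sub_le (by linarith)).trans (le_trans ?_ (le_abs_self _))
    rw [norm_real, Real.norm_of_nonneg (Real.log_natCast_nonneg q)]
    linarith
  simpa using hdiff.add (h.growthOn_logDeriv hε hr)

lemma norm_logDeriv_completed_sub_le_log (h : IsCompletedLFunction q κ j L Λ) (hb : 0 ≤ b)
    (hb2 : b ≤ 2) (hs : 1 / 2 + b < s.re) (y : ℝ) :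
    ‖logDeriv Λ (s + ((-b : ℝ) + y * I)) - logDeriv L (s + ((-b : ℝ) + y * I))‖ ≤
      Real.log q + 24 * Real.log (4 + ‖s‖) + 24 * Real.log (1 + |y|) := by
  have hnorm : ‖s + ((-b : ℝ) + y * I)‖ ≤ ‖s‖ + (b + |y|) := by
    refine (norm_add_le _ _).trans (add_le_add_right ((norm_add_le _ _).trans ?_) _)
    simp [abs_of_nonneg hb]
  have hlog : Real.log (2 + ‖s + ((-b : ℝ) + y * I)‖) ≤
      Real.log (4 + ‖s‖) + Real.log (1 + |y|) := by
    rw [← Real.log_mul (by positivity) (by positivity)]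
    refine Real.log_le_log (by positivity) ?_
    nlinarith [abs_nonneg y, norm_nonneg s]
  linarith [h.norm_logDeriv_completed_sub_le (s := s + ((-b : ℝ) + y * I)) (by simp; linarith)]

lemma growthOn_logDeriv_const_add {f : ℂ → ℂ}
    (hf : ∀ ε > 0, GrowthOn (logDeriv f) {s | 1 / 2 + ε ≤ s.re} r) (hs : 1 / 2 + b < s.re) :
    GrowthOn (fun w => logDeriv f (s + w)) (re ⁻¹' Ici (-b)) r :=
  (hf (s.re - b - 1 / 2) (by linarith)).comp_const_add s fun w (hw : -b ≤ w.re) => by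
    rw [Set.mem_ofPred_eq, add_re]
    linarith

lemma differentiableOn_logDeriv_const_add {f : ℂ → ℂ} (hf : Differentiable ℂ f)
    (hne : ∀ z : ℂ, 1 / 2 < z.re → f z ≠ 0) (hs : 1 / 2 + b < s.re) :
    DifferentiableOn ℂ (fun w => logDeriv f (s + w)) (re ⁻¹' Ici (-b)) := by
  intro w (hw : -b ≤ w.re)
  have hre : 1 / 2 < (s + w).re := by rw [add_re]; linarith
  exact (((hf.deriv _).div (hf _) (hne _ hre)).comp w (by fun_prop)).differentiableWithinAt

lemma re_logDeriv_completed_le (h : IsCompletedLFunction q κ j L Λ) {l : ℝ} (hl : 0 < l)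
    (hbl : b * l = 2) (hb2 : b ≤ 2) (hs : 1 / 2 + b < s.re) :
    (logDeriv Λ s).re ≤ 316 * (Real.log q + Real.log (4 + ‖s‖)) +
      ‖verticalIntegral (fun w => smoothingKernel l w * logDeriv L (s + w)) 1‖ / Real.pi := by
  have hb : 0 < b := by nlinarith
  have hkernel := re_le_of_norm_sub_le_log (F := fun w => logDeriv L (s + w))
    (H := fun w => logDeriv Λ (s + w)) hl hbl hb2 (by norm_num) one_half_pos.le one_half_lt_one
    (differentiableOn_logDeriv_const_add h.differentiable h.ne_zero hs)
    (differentiableOn_logDeriv_const_add h.differentiable_completed h.hasCriticalLine.ne_zero hs)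
    (growthOn_logDeriv_const_add (fun ε hε => h.growthOn_logDeriv hε one_half_pos) hs)
    (growthOn_logDeriv_const_add (fun ε hε => h.growthOn_logDeriv_completed hε one_half_pos) hs)
    (fun y => h.hasCriticalLine.re_logDeriv_nonneg (by simp; linarith))
    (h.norm_logDeriv_completed_sub_le_log hb.le hb2 hs)
  rw [add_zero] at hkernel
  have hsub := h.norm_logDeriv_completed_sub_le (s := s) (by linarith)
  have hlogq := Real.log_natCast_nonneg q
  have hlog : Real.log (2 + ‖s‖) ≤ Real.log (4 + ‖s‖) :=
    Real.log_le_log (by positivity) (by linarith)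
  have hone : 1 ≤ Real.log (4 + ‖s‖) := one_le_log_of_three_le (by linarith [norm_nonneg s])
  rw [← sub_le_iff_le_add', le_div_iff₀ Real.pi_pos]
  nlinarith [Real.pi_gt_three]

end IsCompletedLFunction

section LogDerivative

lemma growthOn_LSeries {a : ℕ → ℂ} {x : ℝ} (ha : LSeriesSummable a x) :
    GrowthOn (LSeries a) (re ⁻¹' {x}) 0 :=
  .of_norm_le fun _ hz => tsum_of_norm_bounded ha.norm.hasSum
    (LSeries.norm_term_le_of_re_le_re a (ofReal_re x ▸ hz.ge))

lemma growthOn_logDeriv_LFunction {N : ℕ} [NeZero N] (χ : DirichletCharacter ℂ N) {x : ℝ}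
    (hx : 1 < x) : GrowthOn (logDeriv (LFunction χ)) (re ⁻¹' {x}) 0 := by
  refine (growthOn_LSeries (LSeriesSummable_twist_vonMangoldt χ
    (by rwa [ofReal_re]))).neg_left.congr' ?_ .rfl
  filter_upwards [mem_inf_of_right (mem_principal_self _)] with s (hs : s.re = x)
  exact (logDeriv_LFunction_eq_neg_LSeries χ (by linarith)).symm

lemma differentiableOn_logDeriv_LFunction {N : ℕ} [NeZero N] (χ : DirichletCharacter ℂ N) :
    DifferentiableOn ℂ (logDeriv (LFunction χ)) {s | 1 < s.re} := by
  have hne {s : ℂ} (hs : 1 < s.re) : s ≠ 1 := by rintro rfl; simp at hs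
  have hdiff : DifferentiableOn ℂ (LFunction χ) {s | 1 < s.re} := fun s hs =>
    (differentiableAt_LFunction χ s (.inl (hne hs))).differentiableWithinAt
  exact (hdiff.deriv (isOpen_lt continuous_const continuous_re)).div hdiff fun s (hs : 1 < s.re) =>
    LFunction_ne_zero_of_one_le_re χ (.inr (hne hs)) hs.le

lemma verticalIntegrable_smoothingKernel_mul_logDeriv_LFunction {N : ℕ} [NeZero N]
    (χ : DirichletCharacter ℂ N) {L x : ℝ} (hL : 0 < L) (hx : x ≠ 0) {s : ℂ} (hs : 1 < s.re + x) :
    VerticalIntegrable (fun w => smoothingKernel L w * logDeriv (LFunction χ) (s + w)) x :=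
  verticalIntegrable_smoothingKernel_mul hL hx zero_lt_one
    ((differentiableOn_logDeriv_LFunction χ).continuousOn.comp (by fun_prop)
      fun w (hw : w.re = x) => by simpa [hw])
    ((growthOn_logDeriv_LFunction χ hs).comp_const_add s fun w (hw : w.re = x) => by simp [hw])

lemma logDeriv_LFunctionTrivChar₁_one {s : ℂ} (hs : 1 < s.re) :
    logDeriv (LFunctionTrivChar₁ 1) s =
      (s - 1)⁻¹ + logDeriv (LFunction (1 : DirichletCharacter ℂ 1)) s := by
  have hne : s ≠ 1 := by rintro rfl; simp at hs
  have heq : LFunctionTrivChar₁ 1 =ᶠ[𝓝 s]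
      fun z => (z - 1) * LFunction (1 : DirichletCharacter ℂ 1) z := by
    filter_upwards [isOpen_ne.mem_nhds hne] with z hz
    rw [LFunctionTrivChar₁_one_eq hz, LFunction_modOne_eq]
  rw [(logDeriv_congr_nhds heq).eq_of_nhds, logDeriv_mul (f := (· - 1)) s (sub_ne_zero.mpr hne)
    (LFunction_ne_zero_of_one_le_re _ (.inr hne) hs.le) (by fun_prop)
    (differentiableAt_LFunction _ _ (.inl hne))]
  simp [logDeriv_apply]

variable {X t : ℝ}

lemma one_half_lt_sigma1 (hX : 1 < X) : 1 / 2 < sigma1 X :=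
  lt_add_of_pos_right _ (div_pos four_pos (Real.log_pos hX))

lemma verticalIntegral_smoothingKernel_mul_logDeriv_LFunctionTrivChar₁ (hX : 1 < X) (ht : t ≠ 0) :
    verticalIntegral (fun w => smoothingKernel (Real.log X) w *
        logDeriv (LFunctionTrivChar₁ 1) (sigma1 X + I * t + w)) 1 =
      2 * Real.pi * (smoothingKernel (Real.log X) (1 - (sigma1 X + I * t)) -
        (1 - (sigma1 X + I * t))⁻¹ - vonMangoldtPolynomial (1 : DirichletCharacter ℂ 1) X t) := by
  have hL : 0 < Real.log X := Real.log_pos hX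
  have hσ := one_half_lt_sigma1 hX
  set s : ℂ := sigma1 X + I * t with hs
  have hsre : s.re = sigma1 X := by simp [hs]
  have hpre : (1 - s).re < 1 := by rw [sub_re, one_re, hsre]; linarith
  have hp0 : 1 - s ≠ 0 := fun h => ht <| by simpa [hs] using congrArg im h
  have hpole : VerticalIntegrable
      (fun w => smoothingKernel (Real.log X) w * (w - (1 - s))⁻¹) 1 :=
    verticalIntegrable_smoothingKernel_mul hL one_ne_zero (by norm_num : (-1 : ℝ) < 1)
      (ContinuousOn.inv₀ (by fun_prop) fun w (hw : w.re = 1) => sub_ne_zero.mpr <|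
        by rintro rfl; linarith) (GrowthOn.inv_sub _ _)
  have hintegrable := verticalIntegrable_smoothingKernel_mul_logDeriv_LFunction
    (1 : DirichletCharacter ℂ 1) (s := s) hL one_ne_zero (by linarith)
  rw [mul_sub, sub_eq_add_neg,
    ← verticalIntegral_smoothingKernel_mul_inv_sub one_pos hL hpre hp0,
    ← verticalIntegral_smoothingKernel_mul_logDeriv_LFunction 1 hX t,
    ← verticalIntegral_add hpole hintegrable]
  refine verticalIntegral_congr fun w (hw : w.re = 1) => ?_
  rw [logDeriv_LFunctionTrivChar₁_one (by rw [add_re, hsre, hw]; linarith), mul_add,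
    show w - (1 - s) = s + w - 1 by ring]

lemma norm_smoothingKernel_log_le {p : ℂ} (hX : 4 ≤ X) (hp : p.re ≤ 1 / 2) (hpX : X ≤ ‖p‖ ^ 2) :
    ‖smoothingKernel (Real.log X) p‖ ≤ 2 := by
  have hX0 : 0 < X := by linarith
  have hL : 1 ≤ Real.log X := one_le_log_of_three_le (by linarith)
  have hexp {k : ℝ} (hk : 0 ≤ k) (hk2 : k ≤ 2) : ‖cexp (k * Real.log X * p)‖ ≤ X := by
    rw [norm_exp, ← ofReal_mul, re_ofReal_mul]
    refine (Real.exp_le_exp.mpr ?_).trans_eq (Real.exp_log hX0)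
    have hkL : 0 ≤ k * Real.log X := by positivity
    nlinarith
  have hexp2 := hexp zero_le_two le_rfl
  have hexp1 := hexp zero_le_one one_le_two
  rw [ofReal_ofNat] at hexp2
  rw [ofReal_one, one_mul] at hexp1
  rw [smoothingKernel, norm_div, norm_mul, norm_pow, norm_real, Real.norm_of_nonneg (by linarith),
    div_le_iff₀ (by nlinarith)]
  nlinarith [norm_sub_le (cexp (2 * Real.log X * p)) (cexp (Real.log X * p))]

end LogDerivative

section Ordinates

variable {X t : ℝ} {q κ j : ℕ} {L Λ : ℂ → ℂ}

lemma sum_ordinates_le_logDeriv_integral (h : IsCompletedLFunction q κ j L Λ) (hX : 4 ≤ X)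
    (t : ℝ) {S : Finset ℝ} (hS : ∀ γ ∈ S, L (1 / 2 + I * γ) = 0) :
    ∑ γ ∈ S, (sigma1 X - 1 / 2) / ((sigma1 X - 1 / 2) ^ 2 + (t - γ) ^ 2) ≤
      316 * (Real.log q + Real.log (4 + ‖(sigma1 X + I * t : ℂ)‖)) +
      ‖verticalIntegral (fun w => smoothingKernel (Real.log X) w *
        logDeriv L (sigma1 X + I * t + w)) 1‖ / Real.pi := by
  have hL : 1 ≤ Real.log X := one_le_log_of_three_le (by linarith)
  have hshift : 1 / 2 + 2 / Real.log X < sigma1 X := by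
    rw [sigma1]
    gcongr
    norm_num
  have hinj : InjOn (fun γ : ℝ => (1 / 2 + I * γ : ℂ)) S :=
    fun γ _ γ' _ hγ => by simpa using hγ
  have hzeros : ∀ ρ ∈ S.image fun γ : ℝ => (1 / 2 + I * γ : ℂ), ρ.re = 1 / 2 ∧ Λ ρ = 0 := by
    simp only [Finset.mem_image]
    rintro _ ⟨γ, hγ, rfl⟩
    have hre : (1 / 2 + I * γ : ℂ).re = 1 / 2 := by simp
    exact ⟨hre, by rw [h.completed_eq _ (by rw [hre]; norm_num), hS γ hγ, mul_zero]⟩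
  have hsum := h.hasCriticalLine.sum_re_inv_sub_le hzeros (s := sigma1 X + I * t)
    (by simpa using one_half_lt_sigma1 (by linarith))
  rw [Finset.sum_image hinj] at hsum
  refine (le_of_eq ?_).trans (hsum.trans ?_)
  · refine Finset.sum_congr rfl fun γ _ => ?_
    rw [inv_re, normSq_apply]
    simp
    ring
  · exact h.re_logDeriv_completed_le (b := 2 / Real.log X) (by linarith)
      (div_mul_cancel₀ _ (by linarith)) (div_le_self zero_le_two hL) (by simpa using hshift)

lemma log_four_add_norm_sigma1_le (hX : 4 ≤ X) (ht : 2 ≤ |t|) :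
    Real.log (4 + ‖(sigma1 X + I * t : ℂ)‖) ≤ 3 * Real.log (1 + |t|) := by
  have hσ : |sigma1 X| ≤ 9 / 2 := by
    have hL : 1 ≤ Real.log X := one_le_log_of_three_le (by linarith)
    have hle : 4 / Real.log X ≤ 4 := div_le_self zero_le_four hL
    rw [abs_of_pos (by linarith [one_half_lt_sigma1 (X := X) (by linarith)]), sigma1]
    linarith
  have hnorm : ‖(sigma1 X + I * t : ℂ)‖ ≤ |sigma1 X| + |t| := by
    simpa using norm_add_le (sigma1 X : ℂ) (I * t)
  calc Real.log (4 + ‖(sigma1 X + I * t : ℂ)‖) ≤ Real.log ((1 + |t|) ^ 3) := by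
        gcongr
        nlinarith [sq_nonneg (|t| - 2)]
    _ = 3 * Real.log (1 + |t|) := by rw [Real.log_pow]; norm_num

lemma norm_verticalIntegral_smoothingKernel_mul_logDeriv_LFunction_div_pi [NeZero q]
    (χ : DirichletCharacter ℂ q) (hX : 1 < X) (t : ℝ) :
    ‖verticalIntegral (fun w => smoothingKernel (Real.log X) w *
        logDeriv (LFunction χ) (sigma1 X + I * t + w)) 1‖ / Real.pi =
      2 * ‖vonMangoldtPolynomial χ X t‖ := by
  rw [verticalIntegral_smoothingKernel_mul_logDeriv_LFunction χ hX, norm_neg, norm_mul, norm_mul,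
    norm_ofNat, norm_real, Real.norm_of_nonneg Real.pi_pos.le]
  field_simp

lemma norm_verticalIntegral_smoothingKernel_mul_logDeriv_LFunctionTrivChar₁_div_pi_le
    (hX : 4 ≤ X) (hXt : X ≤ t ^ 2) :
    ‖verticalIntegral (fun w => smoothingKernel (Real.log X) w *
        logDeriv (LFunctionTrivChar₁ 1) (sigma1 X + I * t + w)) 1‖ / Real.pi ≤
      2 * ‖vonMangoldtPolynomial (1 : DirichletCharacter ℂ 1) X t‖ + 5 := by
  set p : ℂ := 1 - (sigma1 X + I * t) with hp
  have hre : p.re ≤ 1 / 2 := by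
    have := one_half_lt_sigma1 (X := X) (by linarith)
    have hpre : p.re = 1 - sigma1 X := by simp [hp]
    linarith
  have him : |t| ≤ ‖p‖ := by simpa [hp] using abs_im_le_norm p
  have hpX : X ≤ ‖p‖ ^ 2 := hXt.trans (sq_abs t ▸ by gcongr)
  have hinv : ‖p⁻¹‖ ≤ 1 / 2 := by
    rw [norm_inv, inv_le_comm₀ (by nlinarith [norm_nonneg p]) one_half_pos]
    nlinarith [norm_nonneg p]
  have ht : t ≠ 0 := by
    rintro rfl
    linarith
  have hnorm : ‖smoothingKernel (Real.log X) p - p⁻¹ - vonMangoldtPolynomial 1 X t‖ ≤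
      2 + 1 / 2 + ‖vonMangoldtPolynomial (1 : DirichletCharacter ℂ 1) X t‖ :=
    (norm_sub_le _ _).trans <| add_le_add_left ((norm_sub_le _ _).trans <|
      add_le_add (norm_smoothingKernel_log_le hX hre hpX) hinv) _
  rw [verticalIntegral_smoothingKernel_mul_logDeriv_LFunctionTrivChar₁ (by linarith) ht,
    norm_mul, norm_mul, norm_ofNat, norm_real, Real.norm_of_nonneg Real.pi_pos.le,
    div_le_iff₀ Real.pi_pos]
  nlinarith [Real.pi_pos]

lemma sum_ordinates_le_EchiT [NeZero q] {χ : DirichletCharacter ℂ q} (hχ : χ.IsPrimitive)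
    (hG : GRHchar χ) (hX : 4 ≤ X) (hXt : X ≤ t ^ 2) {S : Finset ℝ}
    (hS : ∀ γ ∈ S, LFunction χ (1 / 2 + I * γ) = 0) :
    ∑ γ ∈ S, (sigma1 X - 1 / 2) / ((sigma1 X - 1 / 2) ^ 2 + (t - γ) ^ 2) ≤ 953 * EchiT χ X t := by
  have hmain : ∑ γ ∈ S, (sigma1 X - 1 / 2) / ((sigma1 X - 1 / 2) ^ 2 + (t - γ) ^ 2) ≤
      316 * (Real.log q + Real.log (4 + ‖(sigma1 X + I * t : ℂ)‖)) +
      (2 * ‖vonMangoldtPolynomial χ X t‖ + 5) := by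
    rcases eq_or_ne q 1 with rfl | hq
    · obtain rfl : χ = 1 := Subsingleton.elim _ _
      refine (sum_ordinates_le_logDeriv_integral (isCompletedLFunction_LFunctionTrivChar₁ hG) hX t
        fun γ hγ => ?_).trans ?_
      · have hne : (1 / 2 + I * γ : ℂ) ≠ 1 := fun h => by simpa using congrArg re h
        rw [LFunctionTrivChar₁_one_eq hne, ← LFunction_modOne_eq (χ := 1), hS γ hγ, mul_zero]
      · gcongr
        exact norm_verticalIntegral_smoothingKernel_mul_logDeriv_LFunctionTrivChar₁_div_pi_le hX hXt
    · have hχ1 : χ ≠ 1 := fun h => hq <| by rw [← hχ, h, conductor_one]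
      obtain ⟨κ, h⟩ := exists_isCompletedLFunction_LFunction hχ hχ1 hG
      have hsum := sum_ordinates_le_logDeriv_integral h hX t hS
      rw [norm_verticalIntegral_smoothingKernel_mul_logDeriv_LFunction_div_pi χ
        (by linarith)] at hsum
      linarith
  have ht : 2 ≤ |t| := by nlinarith [sq_abs t, abs_nonneg t]
  have hlogt := one_le_log_of_three_le (show 3 ≤ 1 + |t| by linarith)
  have hlogq := Real.log_natCast_nonneg q
  have hlog4 := log_four_add_norm_sigma1_le hX ht
  rw [EchiT_eq, Real.log_mul (NeZero.ne _) (by positivity)]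
  linarith [norm_nonneg (vonMangoldtPolynomial χ X t)]

end Ordinates

lemma summable_and_tsum_subtype_le_of_sum_le {ι : Type*} {p : ι → Prop} {f : ι → ℝ} {B : ℝ}
    (hf : ∀ i, p i → 0 ≤ f i) (h : ∀ S : Finset ι, (∀ i ∈ S, p i) → ∑ i ∈ S, f i ≤ B) :
    Summable (fun i : {i // p i} => f i) ∧ ∑' i : {i // p i}, f i ≤ B := by
  have hsum (S : Finset {i // p i}) : ∑ i ∈ S, f i ≤ B := by
    have := h (S.map (.subtype p)) (by simp +contextual)
    rwa [Finset.sum_map] at this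
  exact ⟨summable_of_sum_le (fun i => hf i i.2) hsum,
    Real.tsum_le_of_sum_le (fun i => hf i i.2) hsum⟩

/-- **Equation (2.2)**: under GRH for `L(s,χ)`, the sum over ordinates `γ_χ` of the
nontrivial zeros of `L(s,χ)` of `(σ₁-1/2)/((σ₁-1/2)² + (t-γ_χ)²)` converges and is
`O(E_χ(X,t))`, with an absolute implied constant. -/
theorem sum_over_zeros_of_L_bound :
    ∃ C > (0 : ℝ), ∀ (M : ℕ) [NeZero M] (χ : DirichletCharacter ℂ M), χ.IsPrimitive →
      GRHchar χ →
      ∀ t : ℝ, ∀ X : ℝ, 4 ≤ X → X ≤ t ^ 2 →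
      Summable (fun x : {x : ℝ // LFunction χ (1 / 2 + I * x) = 0} =>
        (sigma1 X - 1 / 2) / ((sigma1 X - 1 / 2) ^ 2 + (t - (x : ℝ)) ^ 2)) ∧
      (∑' x : {x : ℝ // LFunction χ (1 / 2 + I * x) = 0},
          (sigma1 X - 1 / 2) / ((sigma1 X - 1 / 2) ^ 2 + (t - (x : ℝ)) ^ 2))
        ≤ C * EchiT χ X t := by
  refine ⟨953, by norm_num, fun M _ χ hχ hG t X hX hXt => ?_⟩
  have hσ : 0 < sigma1 X - 1 / 2 := sub_pos.mpr (one_half_lt_sigma1 (by linarith))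
  exact summable_and_tsum_subtype_le_of_sum_le
    (p := fun γ : ℝ => LFunction χ (1 / 2 + I * γ) = 0)
    (f := fun γ : ℝ => (sigma1 X - 1 / 2) / ((sigma1 X - 1 / 2) ^ 2 + (t - γ) ^ 2))
    (fun γ _ => by positivity) fun S hS => sum_ordinates_le_EchiT hχ hG hX hXt hS

end
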